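/- For every integer d ≥ 1, the genus 1 Hurwitz numbers satisfy the recursion H_{1,d} = (d/6) · binom(d,2) · (2d−1) · H_{0,d} + ∑_{i=1}^{d−1} binom(2d−2, 2i−2) · (4d−2) · i² · (d−i) · H_{0,i} · H_{1,d−i} in ℚ. -/

import Mathlib

/-- The number of `r`-tuples `(τ₁, …, τ_r)` of transpositions in the symmetric group on
`d` letters whose product `τ₁ ⬝ τ₂ ⋯ τ_r` is the identity and which generate a subgroup
acting transitively on the `d` letters. -/
noncomputable def hurwitzTupleCount (d r : ℕ) : ℕ :=
  Nat.card {τ : Fin r → Equiv.Perm (Fin d) //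
    (∀ i, (τ i).IsSwap) ∧ (List.ofFn τ).prod = 1 ∧
    ∀ x y : Fin d, ∃ σ ∈ Subgroup.closure (Set.range τ), σ x = y}

/-- The Hurwitz number `H_{g,d}`: `1/d!` times the number of `(2g - 2 + 2d)`-tuples of
transpositions in `S_d` with product the identity, generating a transitive subgroup. -/
noncomputable def hurwitzNumber (g d : ℕ) : ℚ :=
  (hurwitzTupleCount d (2 * g + 2 * d - 2) : ℚ) / (Nat.factorial d : ℚ)

set_option linter.all false

namespace HZ

open Equiv

/-- tuples of transpositions with product one -/
def AllT (α : Type) [DecidableEq α] (r : ℕ) : Set (Fin r → Perm α) :=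
  {τ | (∀ i, (τ i).IsSwap) ∧ (List.ofFn τ).prod = 1}

/-- transitive tuples of transpositions with product one -/
def TrT (α : Type) [DecidableEq α] (r : ℕ) : Set (Fin r → Perm α) :=
  {τ | (∀ i, (τ i).IsSwap) ∧ (List.ofFn τ).prod = 1 ∧
    ∀ x y : α, ∃ σ ∈ Subgroup.closure (Set.range τ), σ x = y}

theorem prod_ofFn_filter {M : Type*} [Monoid M] {r s : ℕ} (R : Finset (Fin r)) (hs : R.card = s)
    (f : Fin r → M) (hf : ∀ i ∉ R, f i = 1) :
    (List.ofFn f).prod = (List.ofFn (fun k => f (R.orderEmbOfFin hs k))).prod := by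
  have h1 : ∀ l : List (Fin r), (l.map f).prod = ((l.filter (fun i => i ∈ R)).map f).prod := by
    intro l
    induction l with
    | nil => simp
    | cons a l ih =>
      by_cases ha : a ∈ R
      · simp [ha, ih]
      · simp [ha, ih, hf a ha]
  have h2 : (List.finRange r).filter (fun i => i ∈ R) = R.sort (· ≤ ·) := by
    refine List.Perm.eq_of_pairwise (le := (· ≤ ·)) ?_ ?_ ?_ ?_
    · intro a b _ _ h1 h2
      exact le_antisymm h1 h2
    · apply List.Pairwise.filter
      exact (List.pairwise_lt_finRange r).imp (fun h => le_of_lt h)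
    · exact Finset.pairwise_sort R (· ≤ ·)
    · rw [List.perm_ext_iff_of_nodup]
      · intro a; simp
      · exact (List.nodup_finRange r).filter _
      · exact Finset.sort_nodup R (· ≤ ·)
  rw [List.ofFn_eq_map, h1, h2, List.ofFn_eq_map, ← Finset.listMap_orderEmbOfFin_finRange R hs,
    List.map_map]
  rfl

theorem isSwap_conj {α β : Type} [DecidableEq α] [DecidableEq β] (e : α ≃ β) (f : Perm α)
    (h : f.IsSwap) : (e.permCongrHom f).IsSwap := by
  obtain ⟨x, y, hxy, rfl⟩ := h
  exact ⟨e x, e y, by simpa using hxy, by ext z; simp [Equiv.swap_apply_def, Equiv.symm_apply_eq]; grind⟩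

theorem allT_congr_aux {α β : Type} [DecidableEq α] [DecidableEq β] (e : α ≃ β) (r : ℕ)
    (τ : Fin r → Perm α) (h : τ ∈ AllT α r) : (fun i => e.permCongrHom (τ i)) ∈ AllT β r := by
  refine ⟨fun i => isSwap_conj e _ (h.1 i), ?_⟩
  have := congrArg e.permCongrHom h.2
  rw [map_one, map_list_prod, List.map_ofFn] at this
  exact this

theorem trT_congr_aux {α β : Type} [DecidableEq α] [DecidableEq β] (e : α ≃ β) (r : ℕ)
    (τ : Fin r → Perm α) (h : τ ∈ TrT α r) : (fun i => e.permCongrHom (τ i)) ∈ TrT β r := by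
  obtain ⟨h1, h2, h3⟩ := h
  have h4 := allT_congr_aux e r τ ⟨h1, h2⟩
  refine ⟨h4.1, h4.2, fun x y => ?_⟩
  obtain ⟨σ, hσ, hxy⟩ := h3 (e.symm x) (e.symm y)
  refine ⟨e.permCongrHom σ, ?_, by simp [hxy]⟩
  have : Set.range (fun i => e.permCongrHom (τ i)) = e.permCongrHom.toMonoidHom '' Set.range τ := by
    rw [← Set.range_comp]; rfl
  rw [this, ← MonoidHom.map_closure]
  exact ⟨σ, hσ, rfl⟩

theorem allT_congr {α β : Type} [DecidableEq α] [DecidableEq β] (e : α ≃ β) (r : ℕ) :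
    Nat.card (AllT α r) = Nat.card (AllT β r) := by
  refine Nat.card_congr ⟨fun τ => ⟨_, allT_congr_aux e r τ.1 τ.2⟩,
    fun τ => ⟨_, allT_congr_aux e.symm r τ.1 τ.2⟩, ?_, ?_⟩
  · intro τ; ext i x; simp
  · intro τ; ext i x; simp

theorem trT_congr {α β : Type} [DecidableEq α] [DecidableEq β] (e : α ≃ β) (r : ℕ) :
    Nat.card (TrT α r) = Nat.card (TrT β r) := by
  refine Nat.card_congr ⟨fun τ => ⟨_, trT_congr_aux e r τ.1 τ.2⟩,
    fun τ => ⟨_, trT_congr_aux e.symm r τ.1 τ.2⟩, ?_, ?_⟩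
  · intro τ; ext i x; simp
  · intro τ; ext i x; simp

section split
open scoped Classical

variable {α : Type} [Fintype α] {r : ℕ}

/-- orbit of the base point -/
noncomputable def orb (a0 : α) (τ : Fin r → Perm α) : Finset α :=
  Finset.univ.filter (fun x => ∃ σ ∈ Subgroup.closure (Set.range τ), σ a0 = x)

/-- indices of transpositions moving a point of `A` -/
noncomputable def rset (A : Finset α) (τ : Fin r → Perm α) : Finset (Fin r) :=
  Finset.univ.filter (fun i => ∃ x ∈ A, τ i x ≠ x)

theorem orb_inv (a0 : α) (τ : Fin r → Perm α) (i : Fin r) (x : α) :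
    τ i x ∈ orb a0 τ ↔ x ∈ orb a0 τ := by
  have hi : τ i ∈ Subgroup.closure (Set.range τ) := Subgroup.subset_closure ⟨i, rfl⟩
  simp only [orb, Finset.mem_filter, Finset.mem_univ, true_and]
  constructor
  · rintro ⟨σ, h, h'⟩
    exact ⟨(τ i)⁻¹ * σ, mul_mem (inv_mem hi) h, by simp [h']⟩
  · rintro ⟨σ, h, h'⟩
    exact ⟨τ i * σ, mul_mem hi h, by simp [h']⟩

/-- gluing of tuples -/
noncomputable def glue (A : Finset α) (R : Finset (Fin r))
    (ab : (Fin R.card → Perm {a // a ∈ A}) × (Fin Rᶜ.card → Perm {a // a ∉ A})) :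
    Fin r → Perm α := fun i =>
  Perm.subtypeCongrHom (fun a => a ∈ A)
    (Sum.elim (fun k => (ab.1 k, 1)) (fun k => (1, ab.2 k)) ((finSumEquivOfFinset (rfl : R.card = _) (rfl : Rᶜ.card = _)).symm i))

theorem glue_left (A : Finset α) (R : Finset (Fin r)) (ab) (k : Fin R.card) :
    glue A R ab (R.orderEmbOfFin rfl k) = Perm.subtypeCongrHom (fun a => a ∈ A) (ab.1 k, 1) := by
  rw [← finSumEquivOfFinset_inl (rfl : R.card = _) (rfl : Rᶜ.card = _)]
  simp [glue, -finSumEquivOfFinset_inl]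

theorem glue_right (A : Finset α) (R : Finset (Fin r)) (ab) (k : Fin Rᶜ.card) :
    glue A R ab (Rᶜ.orderEmbOfFin rfl k) = Perm.subtypeCongrHom (fun a => a ∈ A) (1, ab.2 k) := by
  rw [← finSumEquivOfFinset_inr (rfl : R.card = _) (rfl : Rᶜ.card = _)]
  simp [glue, -finSumEquivOfFinset_inr]

theorem mem_cases (R : Finset (Fin r)) (i : Fin r) :
    (i ∈ R ∧ ∃ k, i = R.orderEmbOfFin rfl k) ∨ (i ∉ R ∧ ∃ k, i = Rᶜ.orderEmbOfFin rfl k) := by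
  by_cases h : i ∈ R
  · left
    refine ⟨h, ?_⟩
    have : i ∈ Set.range (R.orderEmbOfFin rfl) := by rw [Finset.range_orderEmbOfFin]; exact h
    obtain ⟨k, hk⟩ := this
    exact ⟨k, hk.symm⟩
  · right
    refine ⟨h, ?_⟩
    have : i ∈ Set.range (Rᶜ.orderEmbOfFin rfl) := by
      rw [Finset.range_orderEmbOfFin]; simpa using h
    obtain ⟨k, hk⟩ := this
    exact ⟨k, hk.symm⟩

theorem glue_prod (A : Finset α) (R : Finset (Fin r)) (ab) :
    (List.ofFn (glue A R ab)).prod = Perm.subtypeCongrHom (fun a => a ∈ A)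
      ((List.ofFn ab.1).prod, (List.ofFn ab.2).prod) := by
  set f : Fin r → Perm {a // a ∈ A} × Perm {a // a ∉ A} := fun i => (Sum.elim (fun k => (ab.1 k, 1)) (fun k => (1, ab.2 k)) ((finSumEquivOfFinset (rfl : R.card = _) (rfl : Rᶜ.card = _)).symm i)) with hf
  have e1 : ∀ k, f (R.orderEmbOfFin rfl k) = (ab.1 k, 1) := by
    intro k
    rw [← finSumEquivOfFinset_inl (rfl : R.card = _) (rfl : Rᶜ.card = _)]
    simp [hf, -finSumEquivOfFinset_inl, -finSumEquivOfFinset_inr]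
  have e2 : ∀ k, f (Rᶜ.orderEmbOfFin rfl k) = (1, ab.2 k) := by
    intro k
    rw [← finSumEquivOfFinset_inr (rfl : R.card = _) (rfl : Rᶜ.card = _)]
    simp [hf, -finSumEquivOfFinset_inl, -finSumEquivOfFinset_inr]
  have h0 : List.ofFn (glue A R ab) = (List.ofFn f).map (Perm.subtypeCongrHom (fun a => a ∈ A)) := by
    rw [List.map_ofFn]; rfl
  rw [h0, ← map_list_prod]
  congr 1
  ext1
  · have := map_list_prod (MonoidHom.fst (Perm {a // a ∈ A}) (Perm {a // a ∉ A})) (List.ofFn f)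
    rw [List.map_ofFn, prod_ofFn_filter R rfl (MonoidHom.fst _ _ ∘ f)] at this
    · simp only [Function.comp, e1] at this
      exact this
    · intro i hi
      rcases mem_cases R i with h | ⟨_, k, rfl⟩
      · exact absurd h.1 hi
      · simp [e2]
  · have := map_list_prod (MonoidHom.snd (Perm {a // a ∈ A}) (Perm {a // a ∉ A})) (List.ofFn f)
    rw [List.map_ofFn, prod_ofFn_filter Rᶜ rfl (MonoidHom.snd _ _ ∘ f)] at this
    · simp only [Function.comp, e2] at this
      exact this
    · intro i hi
      rcases mem_cases R i with ⟨_, k, rfl⟩ | h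
      · simp [e1]
      · exact absurd h.1 (by simpa using hi)

theorem isSwap_left (A : Finset α) (f : Perm {a // a ∈ A}) (h : f.IsSwap) :
    (Perm.subtypeCongrHom (fun a => a ∈ A) (f, 1)).IsSwap := by
  obtain ⟨x, y, hxy, rfl⟩ := h
  refine ⟨x, y, fun h => hxy (Subtype.ext h), ?_⟩
  ext z
  by_cases hz : z ∈ A
  · simp only [Perm.subtypeCongrHom_apply, Perm.subtypeCongr.left_apply _ _ hz, Equiv.swap_apply_def, Subtype.ext_iff]
    split_ifs <;> rfl
  · simp only [Perm.subtypeCongrHom_apply, Perm.subtypeCongr.right_apply _ _ hz]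
    rw [Equiv.swap_apply_of_ne_of_ne]
    · rfl
    · rintro rfl; exact hz x.2
    · rintro rfl; exact hz y.2

theorem isSwap_right (A : Finset α) (f : Perm {a // a ∉ A}) (h : f.IsSwap) :
    (Perm.subtypeCongrHom (fun a => a ∈ A) (1, f)).IsSwap := by
  obtain ⟨x, y, hxy, rfl⟩ := h
  refine ⟨x, y, fun h => hxy (Subtype.ext h), ?_⟩
  ext z
  by_cases hz : z ∈ A
  · simp only [Perm.subtypeCongrHom_apply, Perm.subtypeCongr.left_apply _ _ hz]
    rw [Equiv.swap_apply_of_ne_of_ne]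
    · rfl
    · rintro rfl; exact x.2 hz
    · rintro rfl; exact y.2 hz
  · simp only [Perm.subtypeCongrHom_apply, Perm.subtypeCongr.right_apply _ _ hz, Equiv.swap_apply_def, Subtype.ext_iff]
    split_ifs <;> rfl

theorem exists_left (A : Finset α) (f : Perm α) (h : f.IsSwap) (hA : ∀ x, f x ∈ A ↔ x ∈ A)
    (hm : ∃ x ∈ A, f x ≠ x) :
    ∃ g : Perm {a // a ∈ A}, g.IsSwap ∧ Perm.subtypeCongrHom (fun a => a ∈ A) (g, 1) = f := by
  obtain ⟨x, y, hxy, rfl⟩ := h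
  obtain ⟨z, hz, hzm⟩ := hm
  have hx : x ∈ A ∧ y ∈ A := by
    have h1 := hA x
    rw [swap_apply_left] at h1
    by_cases hzx : z = x
    · subst hzx; exact ⟨hz, h1.2 hz⟩
    · by_cases hzy : z = y
      · subst hzy; exact ⟨h1.1 hz, hz⟩
      · exact absurd (swap_apply_of_ne_of_ne hzx hzy) hzm
  have hs : (swap (⟨x, hx.1⟩ : {a // a ∈ A}) ⟨y, hx.2⟩).IsSwap :=
    ⟨_, _, by simpa [Subtype.ext_iff] using hxy, rfl⟩
  refine ⟨_, hs, ?_⟩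
  ext z
  by_cases hz : z ∈ A
  · simp only [Perm.subtypeCongrHom_apply, Perm.subtypeCongr.left_apply _ _ hz, Equiv.swap_apply_def, Subtype.ext_iff]
    split_ifs <;> rfl
  · simp only [Perm.subtypeCongrHom_apply, Perm.subtypeCongr.right_apply _ _ hz]
    rw [Equiv.swap_apply_of_ne_of_ne]
    · rfl
    · rintro rfl; exact hz hx.1
    · rintro rfl; exact hz hx.2

theorem exists_right (A : Finset α) (f : Perm α) (h : f.IsSwap) 
    (hm : ¬ ∃ x ∈ A, f x ≠ x) :
    ∃ g : Perm {a // a ∉ A}, g.IsSwap ∧ Perm.subtypeCongrHom (fun a => a ∈ A) (1, g) = f := by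
  obtain ⟨x, y, hxy, rfl⟩ := h
  push Not at hm
  have hx : x ∉ A := fun hx => hxy (by simpa using (hm x hx).symm)
  have hy : y ∉ A := fun hx => hxy (by simpa using (hm y hx))
  have hs : (swap (⟨x, hx⟩ : {a // a ∉ A}) ⟨y, hy⟩).IsSwap :=
    ⟨_, _, by simpa [Subtype.ext_iff] using hxy, rfl⟩
  refine ⟨_, hs, ?_⟩
  ext z
  by_cases hz : z ∈ A
  · simp only [Perm.subtypeCongrHom_apply, Perm.subtypeCongr.left_apply _ _ hz]
    rw [Equiv.swap_apply_of_ne_of_ne]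
    · rfl
    · rintro rfl; exact hx hz
    · rintro rfl; exact hy hz
  · simp only [Perm.subtypeCongrHom_apply, Perm.subtypeCongr.right_apply _ _ hz, Equiv.swap_apply_def, Subtype.ext_iff]
    split_ifs <;> rfl

theorem glue_inj (A : Finset α) (R : Finset (Fin r)) : Function.Injective (glue A R) := by
  intro ab ab' h
  ext1
  · funext k
    have := congrFun h (R.orderEmbOfFin rfl k)
    rw [glue_left, glue_left] at this
    exact (Prod.ext_iff.1 (Perm.subtypeCongrHom_injective _ this)).1
  · funext k
    have := congrFun h (Rᶜ.orderEmbOfFin rfl k)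
    rw [glue_right, glue_right] at this
    exact (Prod.ext_iff.1 (Perm.subtypeCongrHom_injective _ this)).2

theorem closure_restrict (A : Finset α) (R : Finset (Fin r)) (ab) (σ : Perm α)
    (hσ : σ ∈ Subgroup.closure (Set.range (glue A R ab))) :
    ∃ σ' ∈ Subgroup.closure (Set.range ab.1), ∀ x : {a // a ∈ A}, σ x = σ' x := by
  induction hσ using Subgroup.closure_induction with
  | mem x hx =>
    obtain ⟨i, rfl⟩ := hx
    rcases mem_cases R i with ⟨_, k, rfl⟩ | ⟨_, k, rfl⟩
    · exact ⟨ab.1 k, Subgroup.subset_closure ⟨k, rfl⟩, fun x => by rw [glue_left]; simp⟩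
    · exact ⟨1, one_mem _, fun x => by rw [glue_right]; simp⟩
  | one => exact ⟨1, one_mem _, by simp⟩
  | mul x y _ _ hx hy =>
    obtain ⟨a, ha, ha'⟩ := hx
    obtain ⟨b, hb, hb'⟩ := hy
    exact ⟨a * b, mul_mem ha hb, fun z => by simp [hb', ha']⟩
  | inv x _ hx =>
    obtain ⟨a, ha, ha'⟩ := hx
    refine ⟨a⁻¹, inv_mem ha, fun z => ?_⟩
    rw [Perm.inv_eq_iff_eq, ha']; simp

theorem closure_extend (A : Finset α) (R : Finset (Fin r)) (ab) (σ : Perm {a // a ∈ A})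
    (hσ : σ ∈ Subgroup.closure (Set.range ab.1)) :
    Perm.subtypeCongrHom (fun a => a ∈ A) (σ, 1) ∈ Subgroup.closure (Set.range (glue A R ab)) := by
  let φ := (Perm.subtypeCongrHom (fun a => a ∈ A)).comp (MonoidHom.inl _ _)
  have : (Subgroup.closure (Set.range ab.1)).map φ ≤ Subgroup.closure (Set.range (glue A R ab)) := by
    rw [MonoidHom.map_closure]
    apply Subgroup.closure_mono
    rintro _ ⟨_, ⟨k, rfl⟩, rfl⟩
    exact ⟨R.orderEmbOfFin rfl k, by rw [glue_left]; rfl⟩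
  exact this ⟨σ, hσ, rfl⟩

theorem card_piece (a0 : α) (A : Finset α) (h0 : a0 ∈ A) (R : Finset (Fin r)) :
    Nat.card {τ : Fin r → Perm α // τ ∈ AllT α r ∧ orb a0 τ = A ∧ rset A τ = R} =
      Nat.card (TrT {a // a ∈ A} R.card) * Nat.card (AllT {a // a ∉ A} Rᶜ.card) := by
  rw [← Nat.card_prod]
  symm
  have key : ∀ ab : TrT {a // a ∈ A} R.card × AllT {a // a ∉ A} Rᶜ.card,
      glue A R (ab.1.1, ab.2.1) ∈ AllT α r ∧ orb a0 (glue A R (ab.1.1, ab.2.1)) = A ∧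
        rset A (glue A R (ab.1.1, ab.2.1)) = R := by
    rintro ⟨⟨a, ha1, ha2, ha3⟩, ⟨b, hb1, hb2⟩⟩
    refine ⟨⟨?_, ?_⟩, ?_, ?_⟩
    · intro i
      rcases mem_cases R i with ⟨_, k, rfl⟩ | ⟨_, k, rfl⟩
      · rw [glue_left]; exact isSwap_left A _ (ha1 k)
      · rw [glue_right]; exact isSwap_right A _ (hb1 k)
    · rw [glue_prod]
      simp only [ha2, hb2]
      exact map_one _
    · ext x
      simp only [orb, Finset.mem_filter, Finset.mem_univ, true_and]
      constructor
      · rintro ⟨σ, hσ, rfl⟩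
        obtain ⟨σ', _, h'⟩ := closure_restrict A R _ σ hσ
        rw [h' ⟨a0, h0⟩]
        exact (σ' _).2
      · intro hx
        obtain ⟨σ, hσ, h⟩ := ha3 ⟨a0, h0⟩ ⟨x, hx⟩
        refine ⟨_, closure_extend A R (a, b) σ hσ, ?_⟩
        simp [Perm.subtypeCongr.left_apply _ _ h0, h]
    · ext i
      simp only [rset, Finset.mem_filter, Finset.mem_univ, true_and]
      rcases mem_cases R i with ⟨hi, k, rfl⟩ | ⟨hi, k, rfl⟩
      · refine ⟨fun _ => hi, fun _ => ?_⟩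
        obtain ⟨x, y, hxy, hs⟩ := ha1 k
        refine ⟨x, x.2, ?_⟩
        rw [glue_left]
        simp only [hs, Perm.subtypeCongrHom_apply, Perm.subtypeCongr.left_apply_subtype, swap_apply_left]
        exact fun h => hxy (Subtype.ext h.symm)
      · refine ⟨?_, fun h => absurd h hi⟩
        rintro ⟨x, hx, h⟩
        rw [glue_right] at h
        simp [Perm.subtypeCongr.left_apply _ _ hx] at h
  refine Nat.card_congr (Equiv.ofBijective (fun ab => ⟨glue A R (ab.1.1, ab.2.1), key ab⟩) ⟨?_, ?_⟩)
  · rintro ⟨⟨a, ha⟩, ⟨b, hb⟩⟩ ⟨⟨a', ha'⟩, ⟨b', hb'⟩⟩ h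
    have := glue_inj A R (Subtype.ext_iff.1 h)
    simpa using this
  · rintro ⟨τ, ⟨h1, h2⟩, hA, hR⟩
    have hinv : ∀ i x, τ i x ∈ A ↔ x ∈ A := fun i x => by rw [← hA]; exact orb_inv a0 τ i x
    have ha : ∀ k : Fin R.card, ∃ g : Perm {a // a ∈ A}, g.IsSwap ∧
        Perm.subtypeCongrHom (fun a => a ∈ A) (g, 1) = τ (R.orderEmbOfFin rfl k) := by
      intro k
      apply exists_left A _ (h1 _) (hinv _)
      have hk : R.orderEmbOfFin rfl k ∈ rset A τ := by rw [hR]; exact Finset.orderEmbOfFin_mem _ _ _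
      simpa [rset] using hk
    have hb : ∀ k : Fin Rᶜ.card, ∃ g : Perm {a // a ∉ A}, g.IsSwap ∧
        Perm.subtypeCongrHom (fun a => a ∈ A) (1, g) = τ (Rᶜ.orderEmbOfFin rfl k) := by
      intro k
      apply exists_right A _ (h1 _)
      have hk : Rᶜ.orderEmbOfFin rfl k ∉ rset A τ := by
        rw [hR]; exact Finset.mem_compl.1 (Finset.orderEmbOfFin_mem _ _ _)
      simpa [rset] using hk
    choose a ha1 ha2 using ha
    choose b hb1 hb2 using hb
    have hg : glue A R (a, b) = τ := by
      funext i
      rcases mem_cases R i with ⟨_, k, rfl⟩ | ⟨_, k, rfl⟩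
      · rw [glue_left, ← ha2]
      · rw [glue_right, ← hb2]
    have hp : ((List.ofFn a).prod, (List.ofFn b).prod) = (1 : Perm {a // a ∈ A} × Perm {a // a ∉ A}) := by
      apply Perm.subtypeCongrHom_injective
      rw [map_one, ← h2, ← hg, glue_prod]
    rw [Prod.mk_eq_one] at hp
    refine ⟨⟨⟨a, ha1, hp.1, ?_⟩, ⟨b, hb1, hp.2⟩⟩, by simpa using hg⟩
    intro x y
    have hx : (x : α) ∈ orb a0 τ := by rw [hA]; exact x.2
    have hy : (y : α) ∈ orb a0 τ := by rw [hA]; exact y.2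
    simp only [orb, Finset.mem_filter, Finset.mem_univ, true_and] at hx hy
    obtain ⟨σ, hσ, h⟩ := hx
    obtain ⟨σ', hσ', h'⟩ := hy
    rw [← hg] at hσ hσ'
    obtain ⟨ρ, hρ, h''⟩ := closure_restrict A R (a, b) (σ' * σ⁻¹) (mul_mem hσ' (inv_mem hσ))
    refine ⟨ρ, hρ, ?_⟩
    apply Subtype.ext
    rw [← h'', ← h, ← h']
    simp

end split

end HZ
set_option linter.all false
namespace HZ
open Equiv

/-- number of `r`-tuples of transpositions of `S_d` with product one -/
noncomputable def allC (d r : ℕ) : ℕ := Nat.card (AllT (Fin d) r)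

theorem allT_inst {α : Type} (i j : DecidableEq α) (r : ℕ) : @AllT α i r = @AllT α j r := by
  have : i = j := Subsingleton.elim _ _
  subst this
  rfl

theorem exp_formula (d r : ℕ) : allC (d + 1) r =
    ∑ i ∈ Finset.range (d + 1), ∑ s ∈ Finset.range (r + 1),
      d.choose i * r.choose s * (hurwitzTupleCount (i + 1) s * allC (d - i) (r - s)) := by
  classical
  have e0 : allC (d + 1) r = Nat.card (AllT (Option (Fin d)) r) := by
    unfold allC
    exact allT_congr (finSuccEquiv d) r
  have hpiece : ∀ (B : Finset (Fin d)) (R : Finset (Fin r)),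
      Nat.card {τ : Fin r → Perm (Option (Fin d)) // τ ∈ AllT (Option (Fin d)) r ∧
        orb none τ = Finset.insertNone B ∧ rset (Finset.insertNone B) τ = R} =
      hurwitzTupleCount (B.card + 1) R.card * allC (d - B.card) (r - R.card) := by
    intro B R
    have h := card_piece (r := r) (none : Option (Fin d)) (Finset.insertNone B) (by simp) R
    have i1 : {a // a ∈ Finset.insertNone B} ≃ Fin (B.card + 1) :=
      Fintype.equivFinOfCardEq (by rw [Fintype.card_coe, Finset.card_insertNone])
    have i2 : {a // a ∉ Finset.insertNone B} ≃ Fin (d - B.card) :=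
      Fintype.equivFinOfCardEq (by
        rw [Fintype.card_subtype_compl, Fintype.card_coe, Finset.card_insertNone]; simp)
    have h5 : Rᶜ.card = r - R.card := by rw [Finset.card_compl]; simp
    have h' := h.trans (congrArg₂ (· * ·) (@trT_congr _ _ (_) (inferInstance) i1 R.card) (@allT_congr _ _ (_) (inferInstance) i2 Rᶜ.card))
    have h'' : _ = Nat.card (TrT (Fin (B.card + 1)) R.card) * Nat.card (AllT (Fin (d - B.card)) Rᶜ.card) := h'
    rw [h5] at h''
    refine Eq.trans ?_ h''
    refine Nat.card_congr (Equiv.subtypeEquivRight (fun τ => ?_))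
    rw [allT_inst]
  rw [e0]
  have e1 : Nat.card (AllT (Option (Fin d)) r) =
      ∑ BR : Finset (Fin d) × Finset (Fin r), Nat.card {τ : Fin r → Perm (Option (Fin d)) // τ ∈ AllT (Option (Fin d)) r ∧
        orb none τ = Finset.insertNone BR.1 ∧ rset (Finset.insertNone BR.1) τ = BR.2} := by
    rw [← Nat.card_sigma]
    symm
    refine Nat.card_congr (Equiv.ofBijective (fun x => ⟨x.2.1, x.2.2.1⟩) ⟨?_, ?_⟩)
    · rintro ⟨⟨B, R⟩, ⟨τ, h1, h2, h3⟩⟩ ⟨⟨B', R'⟩, ⟨τ', h1', h2', h3'⟩⟩ h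
      have h : τ = τ' := by simpa using h
      subst h
      have hB : B = B' := by
        rw [h2] at h2'
        ext x
        have := Finset.ext_iff.1 h2' (some x)
        simpa using this
      subst hB
      have hR : R = R' := by
        exact h3.symm.trans h3'
      subst hR
      rfl
    · rintro ⟨τ, hτ⟩
      have hm : (none : Option (Fin d)) ∈ orb none τ := by
        simp only [orb, Finset.mem_filter, Finset.mem_univ, true_and]
        exact ⟨1, one_mem _, rfl⟩
      have : orb none τ = Finset.insertNone (Finset.eraseNone (orb none τ)) := by
        ext x
        cases x with
        | none => simp [hm]
        | some x => simp
      exact ⟨⟨⟨Finset.eraseNone (orb none τ), rset (Finset.insertNone (Finset.eraseNone (orb none τ))) τ⟩, ⟨τ, hτ, this, rfl⟩⟩, rfl⟩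
  rw [e1, Fintype.sum_prod_type]
  simp_rw [hpiece]
  rw [← Finset.powerset_univ]
  rw [← Finset.powerset_univ]
  rw [Finset.sum_powerset_apply_card (fun b => ∑ R ∈ (Finset.univ : Finset (Fin r)).powerset, hurwitzTupleCount (b + 1) R.card * allC (d - b) (r - R.card))]
  simp only [Finset.card_univ, Fintype.card_fin]
  refine Finset.sum_congr rfl fun i _ => ?_
  rw [Finset.sum_powerset_apply_card (fun b => hurwitzTupleCount (i + 1) b * allC (d - i) (r - b))]
  simp only [Finset.card_univ, Fintype.card_fin, smul_eq_mul, Finset.mul_sum]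
  refine Finset.sum_congr rfl fun i _ => ?_
  ring

end HZ
set_option linter.all false
namespace HZ
open Equiv MvPolynomial

section words
variable (d N : ℕ)

/-- words of length `d` in `N` letters -/
abbrev W := Fin d → Fin N

variable {d N}

/-- monomial of a word -/
noncomputable def xw (w : W d N) : MvPolynomial (Fin N) ℚ := ∏ k, X (w k)

/-- letter count -/
def cnt (i : Fin N) (w : W d N) : ℕ := (Finset.univ.filter (fun k => w k = i)).card

/-- permutation matrix -/
def Mp (τ : Perm (Fin d)) : Matrix (W d N) (W d N) ℚ := fun w w' => if w' = w ∘ τ then 1 else 0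

/-- weighted trace -/
noncomputable def trX (B : Matrix (W d N) (W d N) ℚ) : MvPolynomial (Fin N) ℚ :=
  ∑ w, C (B w w) * xw w

/-- Euler operator -/
noncomputable def th (i : Fin N) : MvPolynomial (Fin N) ℚ →ₗ[ℚ] MvPolynomial (Fin N) ℚ :=
  (LinearMap.mulLeft ℚ (X i)).comp (pderiv i).toLinearMap

theorem th_apply (i : Fin N) (p : MvPolynomial (Fin N) ℚ) : th i p = X i * pderiv i p := rfl

theorem th_mul (i : Fin N) (p q : MvPolynomial (Fin N) ℚ) : th i (p * q) = th i p * q + p * th i q := by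
  simp only [th_apply, Derivation.leibniz, smul_eq_mul]; ring

theorem th_C_mul (i : Fin N) (c : ℚ) (p : MvPolynomial (Fin N) ℚ) : th i (C c * p) = C c * th i p := by
  rw [← smul_eq_C_mul, map_smul, smul_eq_C_mul]

theorem th_X (i j : Fin N) : th i (X j : MvPolynomial (Fin N) ℚ) = if j = i then X j else 0 := by
  rw [th_apply, pderiv_X, Pi.single_apply]
  split_ifs with h1 h2 <;> simp_all

theorem th_prod {ι : Type} (s : Finset ι) (i : Fin N) (f : ι → Fin N) :
    th i (∏ k ∈ s, X (f k) : MvPolynomial (Fin N) ℚ) = ((s.filter (fun k => f k = i)).card : MvPolynomial (Fin N) ℚ) * ∏ k ∈ s, X (f k) := by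
  classical
  induction s using Finset.induction_on with
  | empty => simp [th_apply]
  | insert a s ha ih =>
    rw [Finset.prod_insert ha, th_mul, ih, th_X, Finset.filter_insert]
    split_ifs with h
    · rw [Finset.card_insert_of_notMem (by simp [ha])]; push_cast; ring
    · ring

theorem th_xw (i : Fin N) (w : W d N) : th i (xw w) = C (cnt i w : ℚ) * xw w := by
  unfold xw
  rw [th_prod]
  simp [cnt]

/-- diagonal count matrix -/
def Hm (i : Fin N) : Matrix (W d N) (W d N) ℚ := Matrix.diagonal (fun w => (cnt i w : ℚ))

theorem th_trX (i : Fin N) (B : Matrix (W d N) (W d N) ℚ) : th i (trX B) = trX (Hm i * B) := by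
  unfold trX Hm
  rw [map_sum]
  refine Finset.sum_congr rfl fun w _ => ?_
  rw [th_C_mul, th_xw, Matrix.diagonal_mul, C_mul]; ring

theorem trX_add (A B : Matrix (W d N) (W d N) ℚ) : trX (A + B) = trX A + trX B := by
  simp [trX, add_mul, Finset.sum_add_distrib]

theorem trX_sum {ι : Type} (s : Finset ι) (f : ι → Matrix (W d N) (W d N) ℚ) :
    trX (∑ i ∈ s, f i) = ∑ i ∈ s, trX (f i) := by
  classical
  induction s using Finset.induction_on with
  | empty => simp [trX]
  | insert a s ha ih => rw [Finset.sum_insert ha, Finset.sum_insert ha, trX_add, ih]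

theorem trX_smul (c : ℚ) (B : Matrix (W d N) (W d N) ℚ) : trX (c • B) = C c * trX B := by
  simp [trX, Finset.mul_sum, mul_assoc]

/-- letter replacement -/
def Em (i j : Fin N) : Matrix (W d N) (W d N) ℚ := fun w w' =>
  ∑ k, if w k = i then (if w' = Function.update w k j then 1 else 0) else 0

theorem xw_update (i j : Fin N) (w : W d N) (k : Fin d) (h : w k = i) :
    X j * xw w = X i * xw (Function.update w k j) := by
  unfold xw
  rw [← Finset.mul_prod_erase _ _ (Finset.mem_univ k), ← Finset.mul_prod_erase _ (fun l => X (Function.update w k j l)) (Finset.mem_univ k), h]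
  have : ∏ x ∈ Finset.univ.erase k, (X (Function.update w k j x) : MvPolynomial (Fin N) ℚ) = ∏ x ∈ Finset.univ.erase k, X (w x) := by
    refine Finset.prod_congr rfl fun l hl => ?_
    rw [Function.update_of_ne (Finset.ne_of_mem_erase hl)]
  rw [this]
  simp only [Function.update_self]
  ring

theorem trX_cyc (i j : Fin N) (B : Matrix (W d N) (W d N) ℚ) :
    X j * trX (Em i j * B) = X i * trX (B * Em i j) := by
  have e : ∀ w w' : W d N, X j * (C (Em i j w w') * xw w) = X i * (C (Em i j w w') * xw w') := by
    intro w w'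
    unfold Em
    rw [map_sum, Finset.sum_mul, Finset.sum_mul, Finset.mul_sum, Finset.mul_sum]
    refine Finset.sum_congr rfl fun k _ => ?_
    split_ifs with h1 h2
    · subst h2
      have := xw_update i j w k h1
      linear_combination C (1 : ℚ) * this
    · simp
    · simp
  unfold trX
  simp only [Matrix.mul_apply, map_sum, Finset.sum_mul, Finset.mul_sum]
  conv_rhs => rw [Finset.sum_comm]
  refine Finset.sum_congr rfl fun w _ => Finset.sum_congr rfl fun w' _ => ?_
  rw [C_mul, C_mul]
  linear_combination C (B w' w) * e w w'

/-- restricted swap matrix -/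
def Sm (i j : Fin N) : Matrix (W d N) (W d N) ℚ := fun w w' =>
  ∑ a, ∑ b, if w a = i ∧ w b = j then (if w' = w ∘ (Equiv.swap a b) then 1 else 0) else 0

theorem Sm_symm (i j : Fin N) : (Sm i j : Matrix (W d N) (W d N) ℚ) = Sm j i := by
  ext w w'
  unfold Sm
  rw [Finset.sum_comm]
  refine Finset.sum_congr rfl fun a _ => Finset.sum_congr rfl fun b _ => ?_
  rw [Equiv.swap_comm b a]
  simp only [and_comm]

theorem Sm_self (i : Fin N) : (Sm i i : Matrix (W d N) (W d N) ℚ) = Hm i * Hm i := by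
  ext w w'
  unfold Sm Hm
  rw [Matrix.diagonal_mul_diagonal, Matrix.diagonal_apply]
  have : ∀ a b, (if w a = i ∧ w b = i then (if w' = w ∘ (Equiv.swap a b) then (1:ℚ) else 0) else 0)
      = (if w a = i then 1 else 0) * (if w b = i then 1 else 0) * (if w = w' then 1 else 0) := by
    intro a b
    by_cases ha : w a = i <;> by_cases hb : w b = i <;> simp [ha, hb]
    have : w ∘ (Equiv.swap a b) = w := by
      funext k
      simp only [Function.comp, Equiv.swap_apply_def]
      split_ifs with h1 h2
      · rw [hb, h1, ha]
      · rw [ha, h2, hb]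
      · rfl
    rw [this]; simp [eq_comm]
  simp_rw [this, ← Finset.sum_mul, ← Finset.mul_sum, ← Finset.sum_mul]
  simp [cnt]

theorem Em_mul (i j : Fin N) (B : Matrix (W d N) (W d N) ℚ) (w w' : W d N) :
    (Em i j * B : Matrix (W d N) (W d N) ℚ) w w' = ∑ k, if w k = i then B (Function.update w k j) w' else 0 := by
  simp only [Matrix.mul_apply, Em, Finset.sum_mul]
  rw [Finset.sum_comm]
  refine Finset.sum_congr rfl fun k _ => ?_
  split_ifs with h <;> simp

theorem Em_Em (i j : Fin N) (hij : i ≠ j) :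
    (Em i j * Em j i : Matrix (W d N) (W d N) ℚ) = Sm i j + Hm i := by
  ext w w'
  rw [Em_mul, Matrix.add_apply]
  unfold Em Sm Hm
  rw [Matrix.diagonal_apply]
  have : (if w = w' then (cnt i w : ℚ) else 0) = ∑ k, if w k = i then (if w = w' then 1 else 0) else 0 := by
    simp only [cnt]
    split_ifs <;> simp
  rw [this, ← Finset.sum_add_distrib]
  refine Finset.sum_congr rfl fun k _ => ?_
  by_cases hk : w k = i
  · simp only [hk, if_true, true_and]
    rw [← Finset.add_sum_erase _ _ (Finset.mem_univ k)]
    rw [← Finset.add_sum_erase (a := k) _ (fun b => if w b = j then (if w' = w ∘ (Equiv.swap k b) then (1:ℚ) else 0) else 0) (Finset.mem_univ k)]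
    have h1 : ¬ (w k = j) := by rw [hk]; exact hij
    rw [if_neg h1, zero_add, add_comm]
    congr 1
    · refine Finset.sum_congr rfl fun l hl => ?_
      have hlk := Finset.ne_of_mem_erase hl
      rw [Function.update_of_ne hlk]
      by_cases hl : w l = j
      · simp only [hl, if_true]
        have : Function.update (Function.update w k j) l i = w ∘ (Equiv.swap k l) := by
          funext m
          simp only [Function.update_apply, Function.comp, Equiv.swap_apply_def]
          split_ifs <;> simp_all
        rw [this]
      · simp [hl]
    · simp [← hk, eq_comm]
  · simp [hk]

theorem Em_Mp (i j : Fin N) (τ : Perm (Fin d)) :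
    (Em i j * Mp τ : Matrix (W d N) (W d N) ℚ) = Mp τ * Em i j := by
  ext w w'
  rw [Em_mul]
  simp only [Matrix.mul_apply, Em, Mp, ite_mul, one_mul, zero_mul, Finset.sum_ite_eq', Finset.mem_univ, if_true, Finset.sum_ite_eq]
  refine Fintype.sum_equiv τ.symm _ _ (fun k => ?_)
  simp only [Function.comp, Equiv.apply_symm_apply]
  have : Function.update w k j ∘ τ = Function.update (fun x => w (τ x)) (τ.symm k) j := by
    funext m
    simp only [Function.update_apply, Function.comp, Equiv.eq_symm_apply]
  rw [this]
  rfl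

theorem Mp_mul (σ τ : Perm (Fin d)) : (Mp σ * Mp τ : Matrix (W d N) (W d N) ℚ) = Mp (σ * τ) := by
  ext w w'
  simp only [Matrix.mul_apply, Mp, ite_mul, one_mul, zero_mul, Finset.sum_ite_eq', Finset.mem_univ, if_true, Finset.sum_ite_eq]
  rfl

theorem Mp_one : (Mp 1 : Matrix (W d N) (W d N) ℚ) = 1 := by
  ext w w'
  simp [Mp, Matrix.one_apply, eq_comm]

noncomputable instance swFin : Fintype {τ : Perm (Fin d) // τ.IsSwap} := Fintype.ofFinite _

/-- the sum of all transpositions -/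
noncomputable def Jm : Matrix (W d N) (W d N) ℚ := ∑ τ : {τ : Perm (Fin d) // τ.IsSwap}, Mp τ.1

theorem Em_Jm_pow (i j : Fin N) (r : ℕ) :
    (Em i j * Jm ^ r : Matrix (W d N) (W d N) ℚ) = Jm ^ r * Em i j := by
  have : Commute (Em i j : Matrix (W d N) (W d N) ℚ) Jm := by
    unfold Jm
    apply Commute.sum_right
    intro τ _
    exact Em_Mp i j τ.1
  exact this.pow_right r

theorem Jm_pow (r : ℕ) : (Jm ^ r : Matrix (W d N) (W d N) ℚ) =
    ∑ t : Fin r → {τ : Perm (Fin d) // τ.IsSwap}, Mp (List.ofFn (fun i => (t i).1)).prod := by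
  induction r with
  | zero => simp [Mp_one]
  | succ r ih =>
    rw [pow_succ', ih, ← (Fin.consEquiv (fun _ => {τ : Perm (Fin d) // τ.IsSwap})).sum_comp, Fintype.sum_prod_type]
    conv_lhs => rw [Jm, Finset.sum_mul_sum]
    refine Finset.sum_congr rfl fun a _ => Finset.sum_congr rfl fun t _ => ?_
    rw [Mp_mul]
    simp [List.ofFn_succ, Fin.consEquiv]

theorem two_sum_swap {M : Type} [AddCommMonoid M] (g : Perm (Fin d) → M) :
    ∑ a : Fin d, ∑ b : Fin d, (if a ≠ b then g (Equiv.swap a b) else 0) =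
      2 • ∑ τ : {τ : Perm (Fin d) // τ.IsSwap}, g τ.1 := by
  classical
  rw [← Fintype.sum_prod_type', ← Finset.sum_filter]
  have hmap : ∀ ab ∈ (Finset.univ : Finset (Fin d × Fin d)).filter (fun ab => ab.1 ≠ ab.2),
      Equiv.swap ab.1 ab.2 ∈ (Finset.univ : Finset (Perm (Fin d))).filter (fun τ => τ.IsSwap) := by
    intro ab hab
    simp only [Finset.mem_filter, Finset.mem_univ, true_and] at hab ⊢
    exact ⟨_, _, hab, rfl⟩
  rw [← Finset.sum_fiberwise_of_maps_to hmap]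
  rw [Finset.smul_sum]
  rw [← Finset.sum_subtype (p := fun τ => τ.IsSwap) (Finset.univ.filter (fun τ : Perm (Fin d) => τ.IsSwap)) (by simp) (fun τ => 2 • g τ)]
  refine Finset.sum_congr rfl fun τ hτ => ?_
  simp only [Finset.mem_filter, Finset.mem_univ, true_and] at hτ
  obtain ⟨x, y, hxy, rfl⟩ := hτ
  have : ((Finset.univ : Finset (Fin d × Fin d)).filter (fun ab => ab.1 ≠ ab.2)).filter (fun ab => Equiv.swap ab.1 ab.2 = Equiv.swap x y) = {(x, y), (y, x)} := by
    ext ⟨a, b⟩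
    simp only [Finset.mem_filter, Finset.mem_univ, true_and, Finset.mem_insert, Finset.mem_singleton, Prod.mk.injEq]
    constructor
    · rintro ⟨hab, h⟩
      have h1 : Equiv.swap x y a = b := by rw [← h]; simp
      rw [Equiv.swap_apply_def] at h1
      split_ifs at h1 with h2 h3
      · left; exact ⟨h2, h1.symm⟩
      · right; exact ⟨h3, h1.symm⟩
      · exact absurd h1 hab
    · rintro (⟨rfl, rfl⟩ | ⟨rfl, rfl⟩)
      · exact ⟨hxy, rfl⟩
      · exact ⟨hxy.symm, Equiv.swap_comm _ _⟩
  rw [this, Finset.sum_pair, Equiv.swap_comm y x, two_smul]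
  simpa using fun h _ => hxy h

theorem Jm_eq : (2 • Jm + (d : ℚ) • 1 : Matrix (W d N) (W d N) ℚ) =
    ∑ i, Hm i * Hm i + ∑ i, ∑ j ∈ Finset.univ.erase i, Sm i j := by
  have h1 : (2 • Jm + (d : ℚ) • 1 : Matrix (W d N) (W d N) ℚ) = ∑ a : Fin d, ∑ b : Fin d, Mp (Equiv.swap a b) := by
    have := two_sum_swap (fun τ => (Mp τ : Matrix (W d N) (W d N) ℚ))
    rw [Jm, ← this]
    have h2 : ((d : ℚ) • 1 : Matrix (W d N) (W d N) ℚ) = ∑ a : Fin d, ∑ b : Fin d, if a = b then Mp (Equiv.swap a b) else 0 := by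
      simp only [Finset.sum_ite_eq, Finset.mem_univ, if_true, Equiv.swap_self]
      rw [show Equiv.refl (Fin d) = 1 from rfl, Mp_one]
      simp
      rw [Nat.cast_smul_eq_nsmul, nsmul_eq_mul, mul_one]
    rw [h2, ← Finset.sum_add_distrib]
    refine Finset.sum_congr rfl fun a _ => ?_
    rw [← Finset.sum_add_distrib]
    refine Finset.sum_congr rfl fun b _ => ?_
    by_cases h : a = b <;> simp [h]
  have h3 : ∑ a : Fin d, ∑ b : Fin d, (Mp (Equiv.swap a b) : Matrix (W d N) (W d N) ℚ) = ∑ i, ∑ j, Sm i j := by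
    ext w w'
    simp only [Matrix.sum_apply]
    unfold Sm Mp
    have : ∀ a b, (if w' = w ∘ (Equiv.swap a b) then (1:ℚ) else 0) = ∑ i, ∑ j, if w a = i ∧ w b = j then (if w' = w ∘ (Equiv.swap a b) then (1:ℚ) else 0) else 0 := by
      intro a b
      rw [Finset.sum_eq_single (w a), Finset.sum_eq_single (w b)]
      · simp
      · intro j _ hj; rw [if_neg (fun h => hj h.2.symm)]
      · simp
      · intro i _ hi
        exact Finset.sum_eq_zero fun j _ => if_neg (fun h => hi h.1.symm)
      · simp
    rw [Finset.sum_congr rfl fun a _ => Finset.sum_congr rfl fun b _ => this a b]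
    rw [Finset.sum_congr rfl fun a _ => Finset.sum_comm]
    rw [Finset.sum_comm]
    refine Finset.sum_congr rfl fun i _ => ?_
    rw [Finset.sum_congr rfl fun a _ => Finset.sum_comm]
    rw [Finset.sum_comm]
  rw [h1, h3, ← Finset.sum_add_distrib]
  refine Finset.sum_congr rfl fun i _ => ?_
  rw [← Finset.add_sum_erase _ _ (Finset.mem_univ i), Sm_self]

variable (d N)
/-- character generating function -/
noncomputable def psi (r : ℕ) : MvPolynomial (Fin N) ℚ := trX (Jm ^ r : Matrix (W d N) (W d N) ℚ)

/-- off diagonal part -/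
noncomputable def Uij (r : ℕ) (i j : Fin N) : MvPolynomial (Fin N) ℚ :=
  trX (Sm i j * Jm ^ r : Matrix (W d N) (W d N) ℚ)

theorem Uij_eq (r : ℕ) (i j : Fin N) (hij : i ≠ j) :
    (X i - X j) * Uij d N r i j = X j * th i (psi d N r) - X i * th j (psi d N r) := by
  have h1 := trX_cyc (d := d) i j (Em j i * Jm ^ r)
  rw [mul_assoc, ← Em_Jm_pow, ← mul_assoc, ← mul_assoc, Em_Em i j hij, Em_Em j i hij.symm, add_mul, add_mul,
    trX_add, trX_add, ← th_trX, ← th_trX, Sm_symm j i] at h1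
  unfold Uij psi
  linear_combination -h1

theorem psi_succ (r : ℕ) : 2 * psi d N (r + 1) + C (d : ℚ) * psi d N r =
    ∑ i, th i (th i (psi d N r)) + ∑ i, ∑ j ∈ Finset.univ.erase i, Uij d N r i j := by
  have h := congrArg (fun B => trX (B * Jm ^ r)) (Jm_eq (d := d) (N := N))
  simp only [add_mul, trX_add, Finset.sum_mul, trX_sum, smul_mul_assoc, one_mul, trX_smul] at h
  unfold psi Uij
  simp only [th_trX]
  rw [pow_succ', two_mul, ← trX_add, ← two_smul ℕ]
  simp only [mul_assoc] at h
  exact h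

theorem psi_zero : psi d N 0 = (∑ i, X i) ^ d := by
  unfold psi trX xw
  simp only [pow_zero, Matrix.one_apply_eq, C_1, one_mul]
  rw [← Fin.prod_const, Finset.prod_univ_sum, Fintype.piFinset_univ]

/-- exponent of the multilinear monomial -/
noncomputable def mu : Fin N →₀ ℕ := Finsupp.equivFunOnFinite.symm (fun i => if i.1 < d then 1 else 0)

variable {d N}
theorem xw_monomial (w : W d N) : xw w = monomial (∑ k, Finsupp.single (w k) 1) (1 : ℚ) := by
  unfold xw
  rw [monomial_sum_one]
  rfl

theorem Jm_pow_diag (r : ℕ) (w : W d N) (hw : Function.Injective w) :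
    (Jm ^ r : Matrix (W d N) (W d N) ℚ) w w = allC d r := by
  classical
  rw [Jm_pow, Matrix.sum_apply]
  unfold Mp
  have : ∀ t : Fin r → {τ : Perm (Fin d) // τ.IsSwap},
      (w = w ∘ (List.ofFn (fun i => (t i).1)).prod) ↔ (List.ofFn (fun i => (t i).1)).prod = 1 := by
    intro t
    constructor
    · intro h
      ext x
      have := congrFun h x
      exact congrArg Fin.val (hw this).symm
    · intro h; rw [h]; rfl
  simp_rw [this]
  rw [Finset.sum_boole, allC, ← Fintype.card_subtype, ← Nat.card_eq_fintype_card]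
  congr 1
  refine Nat.card_congr ⟨fun t => ⟨fun i => (t.1 i).1, fun i => (t.1 i).2, t.2⟩,
    fun t => ⟨fun i => ⟨t.1 i, t.2.1 i⟩, t.2.2⟩, fun _ => rfl, fun _ => rfl⟩

theorem inj_of_mu (w : W d N) (h : ∑ k, Finsupp.single (w k) 1 = mu d N) : Function.Injective w := by
  classical
  intro a b hab
  by_contra hne
  have h1 := DFunLike.congr_fun h (w a)
  rw [Finsupp.finset_sum_apply] at h1
  have h2 : mu d N (w a) ≤ 1 := by
    simp only [mu, Finsupp.equivFunOnFinite_symm_apply_apply]; split_ifs <;> simp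
  have h3 : ∑ k ∈ ({a, b} : Finset (Fin d)), (Finsupp.single (w k) 1 : Fin N →₀ ℕ) (w a) ≤ ∑ k, (Finsupp.single (w k) 1 : Fin N →₀ ℕ) (w a) :=
    Finset.sum_le_sum_of_subset (Finset.subset_univ _)
  rw [Finset.sum_pair hne] at h3
  simp [hab] at h3
  rw [hab] at h1 h2
  omega

variable (d N)
theorem coeff_psi (r : ℕ) : coeff (mu d N) (psi d N r) = allC d r * coeff (mu d N) ((∑ i, X i) ^ d) := by
  classical
  have key : ∀ r, coeff (mu d N) (psi d N r) = ∑ w : W d N, if ∑ k, Finsupp.single (w k) 1 = mu d N then (allC d r : ℚ) else 0 := by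
    intro r
    unfold psi trX
    rw [coeff_sum]
    refine Finset.sum_congr rfl fun w _ => ?_
    rw [xw_monomial, coeff_C_mul, coeff_monomial]
    split_ifs with h
    · rw [Jm_pow_diag r w (inj_of_mu w h), mul_one]
    · simp
  rw [← psi_zero, key, key, Finset.mul_sum]
  refine Finset.sum_congr rfl fun w _ => ?_
  have : allC d 0 = 1 := by
    unfold allC
    have : AllT (Fin d) 0 = Set.univ := by
      ext t; simp [AllT]
    rw [this]; simp
  rw [this]; split_ifs <;> simp

theorem coeff_p1_ne (h : d ≤ N) : coeff (mu d N) ((∑ i, X i : MvPolynomial (Fin N) ℚ) ^ d) ≠ 0 := by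
  classical
  rw [← psi_zero]
  unfold psi trX
  rw [coeff_sum]
  simp only [pow_zero, Matrix.one_apply_eq, C_1, one_mul, xw_monomial, coeff_monomial]
  rw [Finset.sum_boole]
  simp only [ne_eq, Nat.cast_eq_zero, Finset.card_eq_zero]
  apply Finset.Nonempty.ne_empty
  refine ⟨fun k => Fin.castLE h k, ?_⟩
  simp only [Finset.mem_filter, Finset.mem_univ, true_and]
  ext i
  rw [Finsupp.finset_sum_apply]
  simp only [mu, Finsupp.equivFunOnFinite_symm_apply_apply, Finsupp.single_apply]
  split_ifs with hi
  · rw [Finset.sum_eq_single ⟨i, hi⟩]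
    · simp
    · intro b _ hb
      rw [if_neg]
      rintro rfl
      exact hb rfl
    · simp
  · refine Finset.sum_eq_zero fun k _ => ?_
    rw [if_neg]
    rintro rfl
    exact hi k.2

end words
end HZ
set_option linter.all false
namespace HZ
open Equiv MvPolynomial

section spectral
variable {d N : ℕ}

theorem th_monomial (i : Fin N) (l : Fin N →₀ ℕ) (c : ℚ) :
    th i (monomial l c) = monomial l ((l i : ℚ) * c) := by
  rw [th_apply, pderiv_monomial, X, monomial_mul, one_mul, mul_comm c]
  by_cases h : l i = 0
  · simp [h]
  · have : Finsupp.single i 1 + (l - Finsupp.single i 1) = l := by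
     ext j
     simp only [Finsupp.add_apply, Finsupp.tsub_apply, Finsupp.single_apply]
     split_ifs with h2
     · subst h2; omega
     · omega
    rw [this]

theorem coeff_th (i : Fin N) (l : Fin N →₀ ℕ) (p : MvPolynomial (Fin N) ℚ) :
    coeff l (th i p) = l i * coeff l p := by
  classical
  induction p using MvPolynomial.induction_on' with
  | monomial u a => 
    rw [th_monomial, coeff_monomial, coeff_monomial]
    split_ifs with h <;> simp [h]
  | add p q hp hq => rw [map_add, coeff_add, coeff_add, hp, hq]; ring

/-- Vandermonde -/
noncomputable def van (N : ℕ) : MvPolynomial (Fin N) ℚ := (Matrix.vandermonde (fun i : Fin N => (X i : MvPolynomial (Fin N) ℚ))).det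

theorem van_ne : van N ≠ 0 := by
  unfold van
  rw [Matrix.det_vandermonde_ne_zero_iff]
  exact MvPolynomial.X_injective

/-- exponent -/
noncomputable def ex (f : Fin N → ℕ) : Fin N →₀ ℕ := Finsupp.equivFunOnFinite.symm f

@[simp] theorem ex_apply (f : Fin N → ℕ) (i) : ex f i = f i := rfl

theorem prod_X_pow (f : Fin N → ℕ) : (∏ i, X i ^ f i : MvPolynomial (Fin N) ℚ) = monomial (ex f) 1 := by
  rw [monomial_eq, Finsupp.prod_fintype]
  · simp
  · simp

theorem van_sum : van N = ∑ σ : Perm (Fin N), (Perm.sign σ : ℤ) • monomial (ex (fun i => (σ i : ℕ))) (1:ℚ) := by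
  unfold van
  rw [← Matrix.det_transpose, Matrix.det_apply]
  refine Finset.sum_congr rfl fun σ _ => ?_
  rw [← prod_X_pow]
  simp [Matrix.vandermonde_apply, Units.smul_def]

theorem lap_van : ∑ i, th i (th i (van N)) = C (∑ i : Fin N, ((i : ℕ) : ℚ) ^ 2) * van N := by
  rw [van_sum]
  simp only [map_sum (th _), map_zsmul, th_monomial]
  rw [Finset.sum_comm, Finset.mul_sum]
  refine Finset.sum_congr rfl fun σ _ => ?_
  rw [← Finset.smul_sum, mul_smul_comm, C_mul_monomial, ← map_sum]
  congr 2
  simp only [ex_apply, mul_one]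
  simp only [pow_two]
  exact Equiv.sum_comp σ (fun i : Fin N => ((i:ℕ):ℚ)*((i:ℕ):ℚ))

/-- pairs -/
def prs (N : ℕ) : Finset (Σ _ : Fin N, Fin N) := Finset.univ.sigma (fun i => Finset.Ioi i)

theorem van_prod : van N = ∏ p ∈ prs N, (X p.2 - X p.1) := by
  unfold van prs
  rw [Matrix.det_vandermonde, Finset.prod_sigma]

theorem th_prod' {ι : Type} [DecidableEq ι] (s : Finset ι) (i : Fin N) (f : ι → MvPolynomial (Fin N) ℚ) :
    th i (∏ k ∈ s, f k) = ∑ k ∈ s, (∏ j ∈ s.erase k, f j) * th i (f k) := by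
  induction s using Finset.induction_on with
  | empty => simp [th_apply]
  | insert a s ha ih =>
    rw [Finset.prod_insert ha, th_mul, ih, Finset.sum_insert ha, Finset.erase_insert ha, Finset.mul_sum]
    rw [mul_comm]
    congr 1
    refine Finset.sum_congr rfl fun k hk => ?_
    rw [Finset.erase_insert_of_ne (by rintro rfl; exact ha hk), Finset.prod_insert (by simp [ha])]
    ring

theorem sum_off {M : Type} [AddCommGroup M] (h : Fin N → Fin N → M) (hs : ∀ i j, h i j = h j i) :
    ∑ i, ∑ j ∈ Finset.univ.erase i, h i j = 2 • ∑ p ∈ prs N, h p.1 p.2 := by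
  have e : ∀ i : Fin N, Finset.univ.erase i = Finset.Iio i ∪ Finset.Ioi i := by
    intro i; ext j; simp
  have e2 : ∀ i : Fin N, Disjoint (Finset.Iio i) (Finset.Ioi i) := by
    intro i; rw [Finset.disjoint_left]; intro a ha hb; simp at ha hb; exact absurd ha (not_lt.2 hb.le)
  simp_rw [e, Finset.sum_union (e2 _), Finset.sum_add_distrib]
  unfold prs
  rw [Finset.sum_sigma, two_smul]
  congr 1
  rw [Finset.sum_comm' (t' := Finset.univ) (s' := fun i => Finset.Ioi i) (by simp)]
  simp only [hs]

theorem sum_th_psi (r : ℕ) : ∑ i, th i (psi d N r) = C (d : ℚ) * psi d N r := by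
  unfold psi
  simp only [th_trX]
  rw [← trX_sum, ← Finset.sum_mul]
  have : ∑ i, (Hm i : Matrix (W d N) (W d N) ℚ) = (d : ℚ) • 1 := by
    ext w w'
    rw [Matrix.sum_apply]
    simp only [Hm, Matrix.diagonal_apply, Matrix.smul_apply, Matrix.one_apply]
    split_ifs
    · rw [← Nat.cast_sum]
      simp only [cnt, smul_eq_mul, mul_one]
      rw [← Finset.card_eq_sum_card_fiberwise (f := w) (s := Finset.univ) (t := Finset.univ) (by simp)]
      simp
    · simp
  rw [this, smul_mul_assoc, one_mul, trX_smul]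

/-- product over other pairs -/
noncomputable def vp (p : Σ _ : Fin N, Fin N) : MvPolynomial (Fin N) ℚ := ∏ q ∈ (prs N).erase p, (X q.2 - X q.1)

theorem cross (ψ : MvPolynomial (Fin N) ℚ) : ∑ i, th i (van N) * th i ψ =
    ∑ p ∈ prs N, vp p * (X p.2 * th p.2 ψ - X p.1 * th p.1 ψ) := by
  simp only [van_prod, th_prod', Finset.sum_mul]
  rw [Finset.sum_comm]
  refine Finset.sum_congr rfl fun p hp => ?_
  simp only [map_sub, th_X, mul_assoc]
  unfold vp
  rw [← Finset.mul_sum]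
  simp [sub_mul, Finset.sum_sub_distrib]

theorem step (r : ℕ) : 2 * (van N * psi d N (r+1)) = ∑ i, th i (th i (van N * psi d N r))
    - C (∑ i : Fin N, ((i : ℕ) : ℚ) ^ 2 + (2 * N - 1) * d) * (van N * psi d N r) := by
  have h1 := psi_succ d N r
  set ψ := psi d N r
  have h2 : ∑ i, th i (th i (van N * ψ)) = C (∑ i : Fin N, ((i : ℕ) : ℚ) ^ 2) * van N * ψ + 2 * ∑ i, th i (van N) * th i ψ
      + van N * ∑ i, th i (th i ψ) := by
    rw [← lap_van, Finset.sum_mul, Finset.mul_sum, Finset.mul_sum, ← Finset.sum_add_distrib, ← Finset.sum_add_distrib]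
    refine Finset.sum_congr rfl fun i _ => ?_
    simp only [th_mul, map_add]; ring
  have h3 : van N * ∑ i, ∑ j ∈ Finset.univ.erase i, Uij d N r i j = 2 * ∑ p ∈ prs N, van N * Uij d N r p.1 p.2 := by
    rw [sum_off (fun i j => Uij d N r i j) (fun i j => by unfold Uij; rw [Sm_symm]), nsmul_eq_mul, Finset.mul_sum, Finset.mul_sum, Finset.mul_sum]
    refine Finset.sum_congr rfl fun i _ => ?_
    push_cast; ring
  have h4 : ∑ p ∈ prs N, van N * Uij d N r p.1 p.2 = ∑ p ∈ prs N, (vp p * (X p.2 * th p.2 ψ - X p.1 * th p.1 ψ) - van N * (th p.1 ψ + th p.2 ψ)) := by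
    refine Finset.sum_congr rfl fun p hp => ?_
    have hne : p.1 ≠ p.2 := by
      simp [prs] at hp; exact hp.ne
    have hv : van N = (X p.2 - X p.1) * vp p := by
      rw [van_prod]; unfold vp
      rw [Finset.mul_prod_erase _ (fun q : (Σ _ : Fin N, Fin N) => (X q.2 - X q.1 : MvPolynomial (Fin N) ℚ)) hp]
    have hu := Uij_eq d N r p.1 p.2 hne
    rw [hv]
    linear_combination (- vp p) * hu
  have h5 : 2 * ∑ p ∈ prs N, van N * (th p.1 ψ + th p.2 ψ) = 2 * van N * ((N : MvPolynomial (Fin N) ℚ) - 1) * (C (d : ℚ) * ψ) := by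
    have := sum_off (fun i j => van N * (th i ψ + th j ψ)) (fun i j => by ring)
    rw [nsmul_eq_mul] at this
    push_cast at this
    rw [← this, ← sum_th_psi]
    have e : ∀ i : Fin N, ∑ j ∈ Finset.univ.erase i, van N * (th i ψ + th j ψ) = van N * ((N : MvPolynomial (Fin N) ℚ) * th i ψ + ∑ j, th j ψ - 2 * th i ψ) := by
      intro i
      rw [Finset.sum_erase_eq_sub (Finset.mem_univ i), ← Finset.mul_sum, Finset.sum_add_distrib]
      simp; ring
    simp_rw [e]
    rw [← Finset.mul_sum, Finset.sum_sub_distrib, Finset.sum_add_distrib, ← Finset.mul_sum, ← Finset.mul_sum]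
    simp; ring
  rw [Finset.sum_sub_distrib, ← cross] at h4
  simp only [C_add, C_mul, C_sub, map_one, map_natCast, map_ofNat] at *
  linear_combination van N * h1 - h2 + h3 + 2 * h4 - h5

/-- eigenvalue -/
noncomputable def ev (d N : ℕ) (l : Fin N →₀ ℕ) : ℚ :=
  (∑ i, (l i : ℚ) ^ 2 - ∑ i : Fin N, ((i : ℕ) : ℚ) ^ 2 - (2 * N - 1) * d) / 2

theorem coeff_van_psi (r : ℕ) (l : Fin N →₀ ℕ) :
    coeff l (van N * psi d N r) = ev d N l ^ r * coeff l (van N * (∑ i, X i) ^ d) := by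
  induction r with
  | zero => rw [psi_zero]; simp
  | succ r ih =>
    have h := congrArg (coeff l) (step (d := d) (N := N) r)
    rw [coeff_sub, coeff_C_mul, coeff_sum] at h
    simp only [coeff_th] at h
    rw [show (2 : MvPolynomial (Fin N) ℚ) = C 2 from (map_ofNat C 2).symm, coeff_C_mul] at h
    simp only [← mul_assoc] at h
    rw [← Finset.sum_mul, ih] at h
    rw [pow_succ]
    have : ev d N l = (∑ i, (l i : ℚ) * l i - ∑ i : Fin N, ((i : ℕ) : ℚ) ^ 2 - (2 * N - 1) * d) / 2 := by
      unfold ev; simp only [pow_two]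
    have h2 : coeff l (van N * psi d N (r+1)) = ev d N l * (ev d N l ^ r * coeff l (van N * (∑ i, X i) ^ d)) := by
      rw [this] at h ⊢
      linear_combination h / 2
    rw [h2]; ring

end spectral
end HZ
set_option linter.all false
namespace HZ
open Equiv MvPolynomial

section JT
variable {d N : ℕ}

local notation "RR" => MvPolynomial (Fin N) ℚ

/-- inverse factorial -/
noncomputable def ifac (l j : ℕ) : ℚ := if j ≤ l then 1 / ((l - j).factorial : ℚ) else 0

/-- geometric series -/
noncomputable def geo (x : RR) : PowerSeries RR := PowerSeries.mk (fun n => x ^ n)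

theorem geo_mul (x : RR) : geo x * (1 - PowerSeries.C x * PowerSeries.X) = 1 := by
  ext n
  rw [mul_sub, mul_one, map_sub, mul_left_comm, PowerSeries.coeff_C_mul]
  cases n with
  | zero => simp [geo]
  | succ n => 
    rw [PowerSeries.coeff_succ_mul_X]
    simp [geo, PowerSeries.coeff_one, pow_succ', mul_comm]

/-- complete homogeneous series -/
noncomputable def HH (N : ℕ) : PowerSeries (MvPolynomial (Fin N) ℚ) := ∏ j : Fin N, geo (X j)

/-- shifted complete homogeneous -/
noncomputable def hs (N : ℕ) (l j : ℕ) : MvPolynomial (Fin N) ℚ :=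
  if j ≤ l then PowerSeries.coeff (l - j) (HH N) else 0

/-- elementary without one variable -/
noncomputable def EE (m : Fin N) : Polynomial RR := ∏ j ∈ Finset.univ.erase m, (1 - Polynomial.C (X j) * Polynomial.X)

theorem EE_deg (m : Fin N) : (EE m).natDegree < N := by
  have h1 : (EE m).natDegree ≤ ∑ j ∈ Finset.univ.erase m, 1 := by
    refine (Polynomial.natDegree_prod_le _ _).trans (Finset.sum_le_sum fun j _ => ?_)
    compute_degree
  have := m.2
  simp at h1
  omega

theorem EE_HH (m : Fin N) : (EE m : PowerSeries RR) * HH N = geo (X m) := by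
  have : (EE m : PowerSeries RR) = ∏ j ∈ Finset.univ.erase m, (1 - PowerSeries.C (X j) * PowerSeries.X) := by
    unfold EE
    rw [← Polynomial.coeToPowerSeries.ringHom_apply, map_prod]
    simp
  rw [this, HH, ← Finset.mul_prod_erase Finset.univ _ (Finset.mem_univ m), mul_left_comm, ← Finset.prod_mul_distrib]
  rw [Finset.prod_eq_one, mul_one]
  intro j _
  rw [mul_comm, geo_mul]

theorem X_pow_eq (m : Fin N) (l : ℕ) : (X m ^ l : RR) = ∑ k : Fin N, (EE m).coeff k * hs N l k := by
  have h := congrArg (PowerSeries.coeff l) (EE_HH m)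
  rw [PowerSeries.coeff_mul, geo, PowerSeries.coeff_mk] at h
  rw [← h, Finset.Nat.sum_antidiagonal_eq_sum_range_succ (fun i j => PowerSeries.coeff i (EE m : PowerSeries RR) * PowerSeries.coeff j (HH N))]
  simp only [Polynomial.coeff_coe]
  rw [Finset.sum_fin_eq_sum_range]
  have e1 : ∑ k ∈ Finset.range l.succ, (EE m).coeff k * PowerSeries.coeff (l - k) (HH N) = ∑ k ∈ Finset.range (max l.succ N), (EE m).coeff k * hs N l k := by
    rw [← Finset.sum_subset (Finset.range_mono (le_max_left l.succ N))]
    · refine Finset.sum_congr rfl fun k hk => ?_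
      rw [hs, if_pos (by simp at hk; omega)]
    · intro k _ hk
      rw [hs, if_neg (by simp at hk; omega), mul_zero]
  rw [e1, ← Finset.sum_subset (Finset.range_mono (le_max_right l.succ N))]
  · refine Finset.sum_congr rfl fun k hk => ?_
    rw [dif_pos (by simpa using hk)]
  · intro k _ hk
    rw [Polynomial.coeff_eq_zero_of_natDegree_lt, zero_mul]
    have := EE_deg m
    simp at hk; omega

theorem hs_tri : (Matrix.of fun k i : Fin N => hs N i k).det = 1 := by
  rw [Matrix.det_of_upperTriangular]
  · apply Finset.prod_eq_one
    intro i _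
    simp only [Matrix.of_apply, hs, le_refl, if_true, Nat.sub_self, PowerSeries.coeff_zero_eq_constantCoeff]
    rw [HH, map_prod]
    apply Finset.prod_eq_one
    intro j _
    rw [← PowerSeries.coeff_zero_eq_constantCoeff_apply]
    simp [geo]
  · intro i j hij
    simp only [Matrix.of_apply, hs]
    rw [if_neg]
    simpa using hij

theorem JT_aux (l : Fin N → ℕ) : (Matrix.of fun m i : Fin N => (X m ^ l i : RR)).det =
    (Matrix.of fun m k : Fin N => (EE m).coeff k).det * (Matrix.of fun k i : Fin N => hs N (l i) k).det := by
  rw [← Matrix.det_mul]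
  congr 1
  ext1 m i
  rw [Matrix.mul_apply]
  simp only [Matrix.of_apply]
  exact X_pow_eq m (l i)

theorem JT (l : Fin N → ℕ) : (Matrix.of fun m i : Fin N => (X m ^ l i : RR)).det =
    van N * (Matrix.of fun k i : Fin N => hs N (l i) k).det := by
  rw [JT_aux l]
  congr 1
  have := JT_aux (N := N) (fun i => (i : ℕ))
  rw [hs_tri, mul_one] at this
  rw [← this]; rfl

/-- ideal of squares -/
noncomputable def sqI (N : ℕ) : Ideal (MvPolynomial (Fin N) ℚ) := Ideal.span (Set.range (fun i => X i ^ 2))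

theorem exp_prod {A : Type} [CommRing A] [Algebra ℚ A] {ι : Type} (s : Finset ι) (x : ι → A) :
    ∏ j ∈ s, PowerSeries.rescale (x j) (PowerSeries.exp A) = PowerSeries.rescale (∑ j ∈ s, x j) (PowerSeries.exp A) := by
  classical
  induction s using Finset.induction_on with
  | empty => simp [PowerSeries.rescale_zero]
  | insert a s ha ih => rw [Finset.prod_insert ha, Finset.sum_insert ha, ih, PowerSeries.exp_mul_exp_eq_exp_add]

theorem h_mod (k : ℕ) : Ideal.Quotient.mk (sqI N) (PowerSeries.coeff k (HH N)) =
    Ideal.Quotient.mk (sqI N) (C (1 / (k.factorial : ℚ)) * (∑ i, X i) ^ k) := by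
  have h1 : PowerSeries.map (Ideal.Quotient.mk (sqI N)) (HH N) = PowerSeries.rescale (∑ j, Ideal.Quotient.mk (sqI N) (X j)) (PowerSeries.exp _) := by
    rw [← exp_prod, HH, map_prod]
    refine Finset.prod_congr rfl fun j _ => ?_
    ext n
    rw [PowerSeries.coeff_map, PowerSeries.coeff_rescale, PowerSeries.coeff_exp, geo, PowerSeries.coeff_mk, map_pow]
    have hz : (Ideal.Quotient.mk (sqI N) (X j)) ^ 2 = 0 := by
      rw [← map_pow, Ideal.Quotient.eq_zero_iff_mem]
      exact Ideal.subset_span ⟨j, rfl⟩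
    match n with
    | 0 => simp
    | 1 => simp
    | n + 2 => rw [pow_add, hz]; simp
  have h2 := congrArg (PowerSeries.coeff k) h1
  rw [PowerSeries.coeff_map, PowerSeries.coeff_rescale, PowerSeries.coeff_exp, ← map_sum, ← map_pow] at h2
  rw [h2, map_mul, mul_comm]
  rfl

theorem coeff_sq (p : RR) (hp : p ∈ sqI N) : coeff (mu d N) p = 0 := by
  classical
  suffices h : ∀ a : RR, coeff (mu d N) (a * p) = 0 by simpa using h 1
  unfold sqI at hp
  induction hp using Submodule.span_induction with
  | mem x hx =>
    obtain ⟨i, rfl⟩ := hx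
    intro a
    simp only
    rw [X_pow_eq_monomial, coeff_mul_monomial', if_neg]
    intro h
    have := h i
    simp [mu] at this
    split_ifs at this <;> omega
  | zero => simp
  | add x y _ _ hx hy => intro a; rw [mul_add, coeff_add, hx, hy, add_zero]
  | smul b x _ hx => intro a; rw [smul_eq_mul, ← mul_assoc, hx]

theorem coeff_eq_of_mk (p q : RR) (h : Ideal.Quotient.mk (sqI N) p = Ideal.Quotient.mk (sqI N) q) :
    coeff (mu d N) p = coeff (mu d N) q := by
  rw [Ideal.Quotient.eq] at h
  have := coeff_sq (d := d) _ h
  rw [coeff_sub] at this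
  linarith

theorem sum_val_perm (σ : Perm (Fin N)) : ∑ i, (σ i : ℕ) = ∑ i : Fin N, (i : ℕ) := Equiv.sum_comp σ (fun i : Fin N => (i : ℕ))

theorem coeff_prod_hs (l : Fin N → ℕ) (hl : ∑ i, l i = d + ∑ i : Fin N, (i : ℕ)) (σ : Perm (Fin N)) :
    coeff (mu d N) (∏ i, hs N (l i) (σ i)) = (∏ i, ifac (l i) (σ i)) * coeff (mu d N) ((∑ i, X i) ^ d) := by
  by_cases h : ∀ i, (σ i : ℕ) ≤ l i
  · have h1 : ∀ i, hs N (l i) (σ i) = PowerSeries.coeff (l i - σ i) (HH N) := fun i => if_pos (h i)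
    have h2 : ∀ i, ifac (l i) (σ i) = 1 / ((l i - σ i).factorial : ℚ) := fun i => if_pos (h i)
    simp_rw [h1, h2]
    rw [← coeff_C_mul]
    apply coeff_eq_of_mk
    rw [map_prod]
    simp_rw [h_mod]
    rw [← map_prod, Finset.prod_mul_distrib, ← map_prod, Finset.prod_pow_eq_pow_sum]
    have : ∑ i, (l i - (σ i : ℕ)) = d := by
      have : ∑ i, (l i - (σ i : ℕ)) + ∑ i, (σ i : ℕ) = ∑ i, l i := by
        rw [← Finset.sum_add_distrib]
        exact Finset.sum_congr rfl fun i _ => Nat.sub_add_cancel (h i)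
      rw [hl, sum_val_perm] at this
      omega
    rw [this]
  · push Not at h
    obtain ⟨i, hi⟩ := h
    rw [Finset.prod_eq_zero (Finset.mem_univ i), Finset.prod_eq_zero (Finset.mem_univ i)]
    · simp
    · exact if_neg (by omega)
    · exact if_neg (by omega)

/-- determinant of inverse factorials -/
noncomputable def dif (l : Fin N → ℕ) : ℚ := (Matrix.of fun k i : Fin N => ifac (l i) k).det

theorem dif_eq (l : Fin N → ℕ) : dif l = ∑ σ : Perm (Fin N), (Perm.sign σ : ℤ) • ∏ i, ifac (l i) (σ i) := by
  unfold dif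
  rw [Matrix.det_apply]
  rfl

theorem dif_perm (l : Fin N → ℕ) (σ : Perm (Fin N)) : dif (l ∘ σ) = (Perm.sign σ : ℤ) * dif l := by
  unfold dif
  have := Matrix.det_permute' σ (Matrix.of fun k i : Fin N => ifac (l i) k)
  rw [← this]
  rfl

theorem coeff_det_hs (l : Fin N → ℕ) (hl : ∑ i, l i = d + ∑ i : Fin N, (i : ℕ)) :
    coeff (mu d N) (Matrix.of fun k i : Fin N => hs N (l i) k).det = dif l * coeff (mu d N) ((∑ i, X i) ^ d) := by
  rw [Matrix.det_apply, coeff_sum, dif_eq, Finset.sum_mul]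
  refine Finset.sum_congr rfl fun σ _ => ?_
  rw [Units.smul_def]
  simp only [Matrix.of_apply]
  rw [zsmul_eq_mul, zsmul_eq_mul, mul_assoc, ← coeff_prod_hs l hl, ← map_intCast (C : ℚ →+* RR), coeff_C_mul]

theorem van_rename (σ : Perm (Fin N)) : rename σ (van N) = (Perm.sign σ : ℤ) • van N := by
  unfold van
  rw [AlgHom.map_det, zsmul_eq_mul, ← Matrix.det_permute]
  congr 1
  ext1 i j
  simp [Matrix.vandermonde_apply]

theorem psi_rename (r : ℕ) (σ : Perm (Fin N)) : rename σ (psi d N r) = psi d N r := by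
  unfold psi trX xw
  rw [map_sum]
  have e : ∀ w : W d N, (Jm ^ r : Matrix (W d N) (W d N) ℚ) (σ ∘ w) (σ ∘ w) = (Jm ^ r : Matrix (W d N) (W d N) ℚ) w w := by
    intro w
    rw [Jm_pow, Matrix.sum_apply, Matrix.sum_apply]
    refine Finset.sum_congr rfl fun t _ => ?_
    unfold Mp
    have : (σ ∘ w = (σ ∘ w) ∘ (List.ofFn (fun i => (t i).1)).prod) ↔ (w = w ∘ (List.ofFn (fun i => (t i).1)).prod) := by
      rw [Function.comp_assoc]
      exact (σ.injective.comp_left).eq_iff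
    simp only [this]
  refine Fintype.sum_equiv (Equiv.arrowCongr (Equiv.refl _) σ) _ _ fun w => ?_
  have : (Equiv.arrowCongr (Equiv.refl (Fin d)) σ) w = σ ∘ w := rfl
  rw [this, e]
  simp

theorem antisym (p : RR) (hp : ∀ σ : Perm (Fin N), rename σ p = (Perm.sign σ : ℤ) • p) :
    (N.factorial : RR) * p = ∑ l ∈ p.support, C (coeff l p) * (Matrix.of fun m i : Fin N => (X m ^ l i : RR)).det := by
  have h1 : (N.factorial : RR) * p = ∑ σ : Perm (Fin N), (Perm.sign σ : ℤ) • rename σ p := by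
    have : ∀ σ : Perm (Fin N), (Perm.sign σ : ℤ) • rename σ p = p := by
      intro σ
      rw [hp, smul_smul, ← Units.val_mul, Int.units_mul_self]; simp
    simp_rw [this]
    rw [Finset.sum_const, Finset.card_univ, Fintype.card_perm, Fintype.card_fin, nsmul_eq_mul]
  rw [h1]
  simp_rw [Matrix.det_apply, Finset.mul_sum]
  rw [Finset.sum_comm]
  refine Finset.sum_congr rfl fun σ _ => ?_
  conv_lhs => rw [p.as_sum, map_sum, Finset.smul_sum]
  refine Finset.sum_congr rfl fun l _ => ?_
  rw [Units.smul_def, mul_smul_comm]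
  congr 1
  rw [monomial_eq, map_mul, rename_C, Finsupp.prod_fintype _ _ (by simp), map_prod]
  simp

/-- multinomial coefficients -/
theorem coeff_p1 (k : Fin N →₀ ℕ) (hk : ∑ i, k i = d) :
    coeff k ((∑ i, X i : RR) ^ d) = d.factorial * ∏ i, (1 / ((k i).factorial : ℚ)) := by
  rw [coeff_sum_X_pow_of_fintype, Finsupp.sum_fintype _ _ (by simp), if_pos hk,
    Finsupp.multinomial_eq_of_support_subset (Finset.subset_univ _)]
  have := Nat.multinomial_spec (Finset.univ) k
  rw [hk] at this
  rw [← this]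
  push_cast
  rw [mul_right_comm, ← Finset.prod_mul_distrib, Finset.prod_eq_one, one_mul]
  intro i _
  have : ((k i).factorial : ℚ) ≠ 0 := by positivity
  field_simp

theorem coeff_van_p1 (l : Fin N →₀ ℕ) :
    coeff l (van N * (∑ i, X i) ^ d) = if ∑ i, l i = d + ∑ i : Fin N, (i : ℕ) then d.factorial * dif l else 0 := by
  rw [van_sum, Finset.sum_mul, coeff_sum]
  have key : ∀ σ : Perm (Fin N), coeff l ((Perm.sign σ : ℤ) • monomial (ex fun i => (σ i : ℕ)) (1:ℚ) * (∑ i, X i) ^ d) =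
      if ∑ i, l i = d + ∑ i : Fin N, (i : ℕ) then d.factorial * ((Perm.sign σ : ℤ) • ∏ i, ifac (l i) (σ i)) else 0 := by
    intro σ
    rw [smul_mul_assoc, zsmul_eq_mul, ← map_intCast (C : ℚ →+* RR), coeff_C_mul, coeff_monomial_mul']
    by_cases h : ∀ i, (σ i : ℕ) ≤ l i
    · have h0 : (ex fun i => (σ i : ℕ)) ≤ l := fun i => h i
      rw [if_pos h0, one_mul]
      have h1 : ∑ i, (l - ex fun i => (σ i : ℕ)) i + ∑ i, (σ i : ℕ) = ∑ i, l i := by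
        rw [← Finset.sum_add_distrib]
        exact Finset.sum_congr rfl fun i _ => by simpa using Nat.sub_add_cancel (h i)
      rw [sum_val_perm] at h1
      split_ifs with h2
      · rw [coeff_p1 _ (by omega), zsmul_eq_mul]
        have h3 : ∀ i, ifac (l i) (σ i) = 1 / ((l i - σ i).factorial : ℚ) := fun i => if_pos (h i)
        simp_rw [h3]
        simp only [Finsupp.tsub_apply, ex_apply]
        ring
      · rw [coeff_sum_X_pow_of_fintype, Finsupp.sum_fintype _ _ (by simp), if_neg (by omega)]
        simp
    · have h0 : ¬ (ex fun i => (σ i : ℕ)) ≤ l := fun h' => h (fun i => h' i)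
      rw [if_neg h0]
      push Not at h
      obtain ⟨i, hi⟩ := h
      have : ∏ i, ifac (l i) (σ i) = 0 := Finset.prod_eq_zero (Finset.mem_univ i) (if_neg (by omega))
      rw [this]; simp
  simp_rw [key]
  split_ifs
  · rw [← Finset.mul_sum, ← dif_eq]
  · simp

theorem spectral1 (h : d ≤ N) (r : ℕ) : (N.factorial : ℚ) * allC d r =
    ∑ l ∈ Finset.finsuppAntidiag (Finset.univ : Finset (Fin N)) (d + ∑ i : Fin N, (i : ℕ)), ev d N l ^ r * (d.factorial * dif l) * dif l := by
  have hne := coeff_p1_ne d N h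
  have h1 := antisym (van N * psi d N r) (fun σ => by rw [map_mul, van_rename, psi_rename, smul_mul_assoc])
  simp_rw [JT] at h1
  have h2 : (N.factorial : RR) * psi d N r = ∑ l ∈ (van N * psi d N r).support, C (coeff l (van N * psi d N r)) * (Matrix.of fun k i : Fin N => hs N (l i) k).det := by
    apply mul_left_cancel₀ (van_ne (N := N))
    rw [Finset.mul_sum]
    rw [mul_left_comm, h1]
    exact Finset.sum_congr rfl fun l _ => by ring
  have h3 := congrArg (coeff (mu d N)) h2
  rw [← map_natCast (C : ℚ →+* RR), coeff_C_mul, coeff_psi, coeff_sum] at h3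
  simp_rw [coeff_C_mul, coeff_van_psi] at h3
  apply mul_right_cancel₀ hne
  rw [mul_assoc, h3, Finset.sum_mul]
  have hz : ∀ l : Fin N →₀ ℕ, l ∈ Finset.finsuppAntidiag (Finset.univ : Finset (Fin N)) (d + ∑ i : Fin N, (i : ℕ)) ↔ ∑ i, l i = d + ∑ i : Fin N, (i : ℕ) := by
    intro l; simp [Finset.mem_finsuppAntidiag]
  have hc : ∀ l ∈ Finset.finsuppAntidiag (Finset.univ : Finset (Fin N)) (d + ∑ i : Fin N, (i : ℕ)), ev d N l ^ r * (d.factorial * dif l) = coeff l (van N * psi d N r) := by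
    intro l hl
    rw [coeff_van_psi, coeff_van_p1, if_pos ((hz l).1 hl)]
  have hsub : (van N * psi d N r).support ⊆ Finset.finsuppAntidiag (Finset.univ : Finset (Fin N)) (d + ∑ i : Fin N, (i : ℕ)) := by
    intro l hl
    rw [hz]
    by_contra hcon
    rw [mem_support_iff, coeff_van_psi, coeff_van_p1, if_neg hcon] at hl
    simp at hl
  rw [← Finset.sum_subset hsub]
  · refine Finset.sum_congr rfl fun l hl => ?_
    rw [coeff_van_p1, if_pos ((hz l).1 (hsub hl)), coeff_det_hs _ ((hz l).1 (hsub hl))]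
    ring
  · intro l hl hl2
    rw [hc l hl, notMem_support_iff.1 hl2]; simp

theorem spectral2 (h : d ≤ N) (r : ℕ) : (allC d r : ℚ) / d.factorial =
    ∑ l ∈ Finset.finsuppAntidiag (Finset.univ : Finset (Fin N)) (d + ∑ i : Fin N, (i : ℕ)), ev d N l ^ r * ((∏ i, ifac (l i) i) * dif l) := by
  have h1 := spectral1 h r
  set S := Finset.finsuppAntidiag (Finset.univ : Finset (Fin N)) (d + ∑ i : Fin N, (i : ℕ))
  have hz : ∀ l : Fin N →₀ ℕ, l ∈ S ↔ ∑ i, l i = d + ∑ i : Fin N, (i : ℕ) := by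
    intro l; simp [S, Finset.mem_finsuppAntidiag]
  have key : ∀ σ : Perm (Fin N), ∑ l ∈ S, ev d N l ^ r * (((Perm.sign σ : ℤ) • ∏ i, ifac (l i) (σ i)) * dif l) = ∑ l ∈ S, ev d N l ^ r * ((∏ i, ifac (l i) i) * dif l) := by
    intro σ
    refine Finset.sum_nbij' (fun l => ex (l ∘ σ.symm)) (fun l => ex (l ∘ σ)) ?_ ?_ ?_ ?_ ?_
    · intro l hl
      rw [hz] at hl ⊢
      rw [← hl]
      exact Equiv.sum_comp σ.symm l
    · intro l hl
      rw [hz] at hl ⊢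
      rw [← hl]
      exact Equiv.sum_comp σ l
    · intro l hl; ext i; simp
    · intro l hl; ext i; simp
    · intro l hl
      have e1 : ev d N (ex (l ∘ σ.symm)) = ev d N l := by
        unfold ev
        have : ∑ i, ((ex (l ∘ σ.symm) i : ℕ) : ℚ) ^ 2 = ∑ i, (l i : ℚ) ^ 2 := Equiv.sum_comp σ.symm (fun i => (l i : ℚ) ^ 2)
        rw [this]
      have e2 : ∏ i, ifac (ex (l ∘ σ.symm) i) i = ∏ i, ifac (l i) (σ i) := by
        rw [← Equiv.prod_comp σ]
        simp
      have e3 : dif l = (Perm.sign σ : ℤ) * dif (ex (l ∘ σ.symm)) := by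
        rw [← dif_perm]
        congr 1
        funext i; simp
      rw [e1, e2, e3, zsmul_eq_mul]
      have : ((Perm.sign σ : ℤ) : ℚ) * ((Perm.sign σ : ℤ) : ℚ) = 1 := by
        rw [← Int.cast_mul, ← Units.val_mul, Int.units_mul_self]; simp
      linear_combination (ev d N l ^ r * (∏ i, ifac (l i) (σ i)) * dif (ex (l ∘ σ.symm))) * this
  have h2 : ∑ l ∈ S, ev d N l ^ r * (d.factorial * dif l) * dif l = d.factorial * ((N.factorial : ℚ) * ∑ l ∈ S, ev d N l ^ r * ((∏ i, ifac (l i) i) * dif l)) := by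
    have : (N.factorial : ℚ) * ∑ l ∈ S, ev d N l ^ r * ((∏ i, ifac (l i) i) * dif l) = ∑ σ : Perm (Fin N), ∑ l ∈ S, ev d N l ^ r * (((Perm.sign σ : ℤ) • ∏ i, ifac (l i) (σ i)) * dif l) := by
      simp_rw [key]
      rw [Finset.sum_const, Finset.card_univ, Fintype.card_perm, Fintype.card_fin, nsmul_eq_mul]
    rw [this, Finset.sum_comm, Finset.mul_sum]
    refine Finset.sum_congr rfl fun l _ => ?_
    rw [← Finset.mul_sum, ← Finset.sum_mul, ← dif_eq]
    ring
  rw [h2] at h1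
  have hd : (d.factorial : ℚ) ≠ 0 := by positivity
  have hN : (N.factorial : ℚ) ≠ 0 := by positivity
  rw [div_eq_iff hd]
  apply mul_left_cancel₀ hN
  rw [h1]; ring

end JT
end HZ
set_option linter.all false
namespace HZ
open Equiv

section dodgson

theorem det_one_block {F : Type} [Field F] {n : ℕ} (P : Matrix (Fin n) (Fin n) F) (hP : P.det ≠ 0)
    (p : Matrix (Fin n) (Fin 1) F) (q : Matrix (Fin 1) (Fin n) F) (a : Matrix (Fin 1) (Fin 1) F) :
    (Matrix.fromBlocks P p q a).det = P.det * (a 0 0 - (q * P⁻¹ * p) 0 0) := by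
  haveI : Invertible P := P.invertibleOfIsUnitDet (isUnit_iff_ne_zero.2 hP)
  rw [Matrix.det_fromBlocks₁₁, Matrix.det_fin_one, Matrix.invOf_eq_nonsing_inv, Matrix.sub_apply]

theorem dodgson_field {F : Type} [Field F] (n : ℕ) (g : ℕ → ℕ → F)
    (hP : (Matrix.of fun i j : Fin n => g i j).det ≠ 0) (s : ℕ → ℕ) (hs : ∀ i, s i = if i = n then n + 1 else i) :
    (Matrix.of fun i j : Fin (n+2) => g i j).det * (Matrix.of fun i j : Fin n => g i j).det =
    (Matrix.of fun i j : Fin (n+1) => g i j).det * (Matrix.of fun i j : Fin (n+1) => g (s i) (s j)).det -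
    (Matrix.of fun i j : Fin (n+1) => g (s i) j).det * (Matrix.of fun i j : Fin (n+1) => g i (s j)).det := by
  set P := (Matrix.of fun i j : Fin n => g i j) with hPdef
  have e1 : ∀ x y : ℕ → ℕ, (∀ i < n, x i = i) → (∀ i < n, y i = i) → (Matrix.of fun i j : Fin (n+1) => g (x i) (y j)).det =
      P.det * (g (x n) (y n) - ((Matrix.of fun (_ : Fin 1) (j : Fin n) => g (x n) j) * P⁻¹ * (Matrix.of fun (i : Fin n) (_ : Fin 1) => g i (y n))) 0 0) := by
    intro x y hx hy
    rw [← Matrix.det_submatrix_equiv_self finSumFinEquiv]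
    have : (Matrix.of fun i j : Fin (n+1) => g (x i) (y j)).submatrix finSumFinEquiv finSumFinEquiv =
       Matrix.fromBlocks P (Matrix.of fun (i : Fin n) (_ : Fin 1) => g i (y n)) (Matrix.of fun (_ : Fin 1) (j : Fin n) => g (x n) j) (Matrix.of fun _ _ => g (x n) (y n)) := by
      ext i j
      rcases i with i | i <;> rcases j with j | j <;> simp [hPdef, hx, hy]
    rw [this, det_one_block P hP]
    rfl
  have e2 : (Matrix.of fun i j : Fin (n+2) => g i j).det = P.det * (Matrix.of fun k m : Fin 2 => g (n + k) (n + m) - ((Matrix.of fun (_ : Fin 1) (j : Fin n) => g (n + k) j) * P⁻¹ * (Matrix.of fun (i : Fin n) (_ : Fin 1) => g i (n + m))) 0 0).det := by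
    rw [← Matrix.det_submatrix_equiv_self finSumFinEquiv]
    have : (Matrix.of fun i j : Fin (n+2) => g i j).submatrix finSumFinEquiv finSumFinEquiv =
       Matrix.fromBlocks P (Matrix.of fun (i : Fin n) (m : Fin 2) => g i (n + m)) (Matrix.of fun (k : Fin 2) (j : Fin n) => g (n + k) j) (Matrix.of fun k m => g (n + k) (n + m)) := by
      ext i j
      rcases i with i | i <;> rcases j with j | j <;> simp [hPdef]
    rw [this]
    haveI : Invertible P := P.invertibleOfIsUnitDet (isUnit_iff_ne_zero.2 hP)
    rw [Matrix.det_fromBlocks₁₁, Matrix.invOf_eq_nonsing_inv]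
    rfl
  have hsn : s n = n + 1 := by simp [hs]
  have hsl : ∀ i < n, s i = i := fun i hi => by rw [hs, if_neg (by omega)]
  have a1 := e1 (fun i => i) (fun i => i) (fun _ _ => rfl) (fun _ _ => rfl)
  have a2 := e1 s s hsl hsl
  have a3 := e1 s (fun i => i) hsl (fun _ _ => rfl)
  have a4 := e1 (fun i => i) s (fun _ _ => rfl) hsl
  simp only [hsn] at a1 a2 a3 a4
  rw [a1, a2, a3, a4, e2, Matrix.det_fin_two]
  simp only [Matrix.of_apply, Fin.val_zero, Fin.val_one, add_zero]
  ring

theorem dodgson {S : Type} [CommRing S] [IsDomain S] (n : ℕ) (g : ℕ → ℕ → S)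
    (hP : (Matrix.of fun i j : Fin n => g i j).det ≠ 0) (s : ℕ → ℕ) (hs : ∀ i, s i = if i = n then n + 1 else i) :
    (Matrix.of fun i j : Fin (n+2) => g i j).det * (Matrix.of fun i j : Fin n => g i j).det =
    (Matrix.of fun i j : Fin (n+1) => g i j).det * (Matrix.of fun i j : Fin (n+1) => g (s i) (s j)).det -
    (Matrix.of fun i j : Fin (n+1) => g (s i) j).det * (Matrix.of fun i j : Fin (n+1) => g i (s j)).det := by
  let φ := algebraMap S (FractionRing S)
  have hφ : Function.Injective φ := IsFractionRing.injective S (FractionRing S)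
  have hm : ∀ (m : ℕ) (x y : ℕ → ℕ), φ (Matrix.of fun i j : Fin m => g (x i) (y j)).det = (Matrix.of fun i j : Fin m => φ (g (x i) (y j))).det := by
    intro m x y
    rw [RingHom.map_det]; rfl
  have := dodgson_field n (fun i j => φ (g i j)) (by
    have := hm n (fun i => i) (fun i => i)
    rw [← this]
    exact fun h => hP (hφ (by rw [h, map_zero]))) s hs
  apply hφ
  rw [map_mul, map_sub, map_mul, map_mul]
  have m1 := hm (n+2) (fun i => i) (fun i => i)
  have m2 := hm (n) (fun i => i) (fun i => i)
  have m3 := hm (n+1) (fun i => i) (fun i => i)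
  have m4 := hm (n+1) s s
  have m5 := hm (n+1) s (fun i => i)
  have m6 := hm (n+1) (fun i => i) s
  rw [m1, m2, m3, m4, m5, m6]
  exact this

theorem deriv_prod {S : Type} [CommRing S] (D : S →+ S) (hD : ∀ a b, D (a * b) = a * D b + b * D a) {ι : Type} [DecidableEq ι] (s : Finset ι) (f : ι → S) :
    D (∏ k ∈ s, f k) = ∑ k ∈ s, (∏ j ∈ s.erase k, f j) * D (f k) := by
  induction s using Finset.induction_on with
  | empty =>
    have := hD 1 1
    simp only [mul_one, one_mul] at this
    simpa using this
  | insert a s ha ih =>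
    rw [Finset.prod_insert ha, hD, ih, Finset.sum_insert ha, Finset.erase_insert ha, Finset.mul_sum]
    rw [add_comm]
    congr 1
    refine Finset.sum_congr rfl fun k hk => ?_
    rw [Finset.erase_insert_of_ne (by rintro rfl; exact ha hk), Finset.prod_insert (by simp [ha])]
    ring

theorem deriv_det {S : Type} [CommRing S] (D : S →+ S) (hD : ∀ a b, D (a * b) = a * D b + b * D a) {n : ℕ} (M : Matrix (Fin n) (Fin n) S) :
    D M.det = ∑ k, (M.updateCol k (fun i => D (M i k))).det := by
  simp only [Matrix.det_apply]
  rw [map_sum, Finset.sum_comm]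
  refine Finset.sum_congr rfl fun σ _ => ?_
  rw [Units.smul_def, map_zsmul, deriv_prod D hD, Finset.smul_sum]
  refine Finset.sum_congr rfl fun k _ => ?_
  rw [Units.smul_def, ← Finset.mul_prod_erase Finset.univ _ (Finset.mem_univ k), mul_comm]
  congr 2
  · simp
  · refine Finset.prod_congr rfl fun j hj => ?_
    rw [Matrix.updateCol_ne (Finset.ne_of_mem_erase hj)]

theorem deriv_shift {S : Type} [CommRing S] (D : S →+ S) (hD : ∀ a b, D (a * b) = a * D b + b * D a) (n : ℕ) (F : ℕ → Fin (n+1) → S)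
    (hF : ∀ j i, D (F j i) = F (j + 1) i + j * F j i) (s : ℕ → ℕ) (hs : ∀ i, s i = if i = n then n + 1 else i) :
    D (Matrix.of fun i j : Fin (n+1) => F j i).det = ((∑ i : Fin (n+1), (i : ℕ) : ℕ) : S) * (Matrix.of fun i j : Fin (n+1) => F j i).det
      + (Matrix.of fun i j : Fin (n+1) => F (s j) i).det := by
  set M := (Matrix.of fun i j : Fin (n+1) => F j i)
  rw [deriv_det D hD]
  have : ∀ k : Fin (n+1), (M.updateCol k (fun i => D (M i k))).det = (M.updateCol k (fun i => F (k+1) i)).det + (k : ℕ) * M.det := by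
    intro k
    have e : (fun i => D (M i k)) = (fun i => F (k+1) i) + ((k : ℕ) : S) • (fun i => M i k) := by
      funext i; simp [M, hF]
    rw [e, Matrix.det_updateCol_add, Matrix.det_updateCol_smul, Matrix.updateCol_eq_self]
  simp_rw [this]
  rw [Finset.sum_add_distrib, ← Finset.sum_mul, Nat.cast_sum, add_comm]
  congr 1
  rw [Finset.sum_eq_single (Fin.last n)]
  · congr 1
    ext i j
    simp only [Matrix.updateCol_apply, Matrix.of_apply, hs, M]
    by_cases h : j = Fin.last n
    · subst h; simp
    · rw [if_neg h, if_neg]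
      intro h2; exact h (Fin.ext h2)
  · intro k _ hk
    have hk' : (k : ℕ) < n := by
      have := k.2
      have : (k : ℕ) ≠ n := fun h => hk (Fin.ext h)
      omega
    apply Matrix.det_zero_of_column_eq (i := k) (j := ⟨k + 1, by omega⟩)
    · intro h; have := congrArg Fin.val h; simp at this
    · intro i
      simp only [Matrix.updateCol_apply, if_true, M, Matrix.of_apply]
      rw [if_neg]
      intro h; have := congrArg Fin.val h; simp at this
  · simp

end dodgson
end HZ
set_option linter.all false
namespace HZ
open Equiv

section toda

/-- the coefficient ring in `u` -/
abbrev BB := PowerSeries ℚ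
/-- series in `y` -/
abbrev SS := PowerSeries BB

/-- exponential -/
noncomputable def eu (c : ℚ) : BB := PowerSeries.rescale c (PowerSeries.exp ℚ)

theorem eu_add (a b : ℚ) : eu (a + b) = eu a * eu b := (PowerSeries.exp_mul_exp_eq_exp_add a b).symm

theorem eu_zero : eu 0 = 1 := by simp [eu, PowerSeries.rescale_zero]

theorem eu_coeff (c : ℚ) (r : ℕ) : PowerSeries.coeff r (eu c) = c ^ r / r.factorial := by
  simp [eu, PowerSeries.coeff_rescale, PowerSeries.coeff_exp, div_eq_mul_inv]

theorem eu_sum {ι : Type} (s : Finset ι) (f : ι → ℚ) : ∏ i ∈ s, eu (f i) = eu (∑ i ∈ s, f i) := exp_prod s f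

theorem eu_neg (c : ℚ) : eu c * eu (-c) = 1 := by rw [← eu_add]; simp [eu_zero]

theorem eu_pow (c : ℚ) (n : ℕ) : eu c ^ n = eu (n * c) := by
  induction n with
  | zero => simp [eu_zero]
  | succ n ih => rw [pow_succ, ih, ← eu_add]; congr 1; push_cast; ring

/-- Euler operator -/
noncomputable def thy : SS →+ SS where
  toFun f := PowerSeries.mk fun n => (n : BB) * PowerSeries.coeff n f
  map_zero' := by ext1 n; simp
  map_add' f g := by ext1 n; simp [mul_add]

theorem coeff_thy (f : SS) (n : ℕ) : PowerSeries.coeff n (thy f) = n * PowerSeries.coeff n f := by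
  simp [thy]

theorem thy_mul (f g : SS) : thy (f * g) = f * thy g + g * thy f := by
  ext1 n
  rw [coeff_thy, map_add, mul_comm g, PowerSeries.coeff_mul, PowerSeries.coeff_mul, PowerSeries.coeff_mul, Finset.mul_sum, ← Finset.sum_add_distrib]
  refine Finset.sum_congr rfl fun p hp => ?_
  rw [Finset.HasAntidiagonal.mem_antidiagonal] at hp
  rw [coeff_thy, coeff_thy, ← hp]
  push_cast; ring

/-- matrix entries -/
noncomputable def AA (w : ℕ → BB) (i j : ℕ) : SS := PowerSeries.mk fun l => w l * PowerSeries.C (ifac l i * ifac l j)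

/-- tau determinants -/
noncomputable def DD (w : ℕ → BB) (n : ℕ) : SS := (Matrix.of fun i j : Fin n => AA w i j).det

theorem AA_symm (w : ℕ → BB) (i j : ℕ) : AA w i j = AA w j i := by
  unfold AA; ext1 l; simp [mul_comm]

theorem ifac_succ (l j : ℕ) : (l : ℚ) * ifac l j = ifac l (j + 1) + j * ifac l j := by
  unfold ifac
  rcases lt_trichotomy l j with h | h | h
  · rw [if_neg (by omega), if_neg (by omega)]; simp
  · subst h; rw [if_pos le_rfl, if_neg (by omega)]; simp
  · obtain ⟨k, rfl⟩ : ∃ k, l = j + 1 + k := ⟨l - j - 1, by omega⟩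
    rw [if_pos (by omega), if_pos (by omega)]
    rw [show j + 1 + k - j = k + 1 by omega, show j + 1 + k - (j + 1) = k by omega, Nat.factorial_succ]
    have : (k.factorial : ℚ) ≠ 0 := by positivity
    have : ((k : ℚ) + 1) ≠ 0 := by positivity
    push_cast
    field_simp
    ring

theorem thy_AA (w : ℕ → BB) (i j : ℕ) : thy (AA w i j) = AA w i (j + 1) + j * AA w i j := by
  ext1 l
  rw [coeff_thy, map_add, ← nsmul_eq_mul j, map_nsmul, nsmul_eq_mul]
  simp only [AA, PowerSeries.coeff_mk]
  have h := congrArg (PowerSeries.C (R := ℚ)) (ifac_succ l j)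
  simp only [map_mul, map_add, map_natCast] at h ⊢
  linear_combination (w l * PowerSeries.C (ifac l i)) * h

/-- `c_n` -/
def cc (n : ℕ) : ℕ := ∑ i : Fin n, (i : ℕ)

theorem cc_succ (n : ℕ) : cc (n + 1) = cc n + n := by
  unfold cc; rw [Fin.sum_univ_castSucc]; simp

theorem toda_det (w : ℕ → BB) (n : ℕ) (h : DD w n ≠ 0) :
    DD w (n + 2) * DD w n = DD w (n+1) * (thy (thy (DD w (n+1)) - cc (n+1) * DD w (n+1)) - cc (n+1) * (thy (DD w (n+1)) - cc (n+1) * DD w (n+1)))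
      - (thy (DD w (n+1)) - cc (n+1) * DD w (n+1)) ^ 2 := by
  let s : ℕ → ℕ := fun i => if i = n then n + 1 else i
  have d := dodgson n (AA w) h s (fun i => rfl)
  have h1 : (Matrix.of fun i j : Fin (n+1) => AA w i (s j)).det = thy (DD w (n+1)) - cc (n+1) * DD w (n+1) := by
    have := deriv_shift thy thy_mul n (fun j i => AA w i j) (fun j i => thy_AA w i j) s (fun i => rfl)
    unfold DD cc
    rw [this]; ring
  have h1' : (Matrix.of fun i j : Fin (n+1) => AA w (s i) j).det = thy (DD w (n+1)) - cc (n+1) * DD w (n+1) := by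
    rw [← h1, ← Matrix.det_transpose]
    congr 1
    ext1 i j
    simp [Matrix.transpose_apply, AA_symm w]
  have h2 : (Matrix.of fun i j : Fin (n+1) => AA w (s i) (s j)).det = thy (thy (DD w (n+1)) - cc (n+1) * DD w (n+1)) - cc (n+1) * (thy (DD w (n+1)) - cc (n+1) * DD w (n+1)) := by
    have := deriv_shift thy thy_mul n (fun j i => AA w (s i) j) (fun j i => thy_AA w (s i) j) s (fun i => rfl)
    rw [h1'] at this
    rw [this]; unfold cc; ring
  rw [h1, h1', h2] at d
  unfold DD at *
  rw [d]; ring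

theorem coeff_DD (w : ℕ → BB) (n m : ℕ) : PowerSeries.coeff m (DD w n) =
    ∑ l ∈ Finset.finsuppAntidiag (Finset.univ : Finset (Fin n)) m, (∏ i, w (l i)) * PowerSeries.C ((∏ i, ifac (l i) i) * dif l) := by
  unfold DD
  rw [Matrix.det_apply, map_sum]
  have : ∀ σ : Perm (Fin n), PowerSeries.coeff m (Perm.sign σ • ∏ i, (Matrix.of fun i j : Fin n => AA w i j) (σ i) i) =
     ∑ l ∈ Finset.finsuppAntidiag (Finset.univ : Finset (Fin n)) m, (∏ i, w (l i)) * PowerSeries.C ((∏ i, ifac (l i) i) * ((Perm.sign σ : ℤ) • ∏ i, ifac (l i) (σ i))) := by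
    intro σ
    rw [Units.smul_def, map_zsmul, PowerSeries.coeff_prod, Finset.smul_sum]
    refine Finset.sum_congr rfl fun l _ => ?_
    simp only [Matrix.of_apply, AA, PowerSeries.coeff_mk]
    rw [Finset.prod_mul_distrib, ← map_prod, Finset.prod_mul_distrib, mul_smul_comm, map_zsmul, mul_smul_comm, mul_comm (∏ i, ifac (l i) (σ i))]
  simp_rw [this]
  rw [Finset.sum_comm]
  refine Finset.sum_congr rfl fun l _ => ?_
  rw [← Finset.mul_sum, ← map_sum, ← Finset.mul_sum, dif_eq]

/-- weights -/
noncomputable def wN (N : ℕ) (l : ℕ) : BB := eu ((l : ℚ) ^ 2 / 2 - (N - 1/2) * l)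

/-- scalar exponent -/
noncomputable def CC (N : ℕ) : ℚ := (N - 1/2) * cc N - (∑ i : Fin N, ((i : ℕ) : ℚ) ^ 2) / 2

/-- generating function in `u` -/
noncomputable def KK (d : ℕ) : BB := PowerSeries.mk fun r => (allC d r : ℚ) / d.factorial / r.factorial

theorem coeff_DD_wN (N d : ℕ) (h : d ≤ N) : PowerSeries.coeff (d + cc N) (DD (wN N) N) = eu (- CC N) * KK d := by
  rw [coeff_DD]
  have : KK d = ∑ l ∈ Finset.finsuppAntidiag (Finset.univ : Finset (Fin N)) (d + cc N), eu (ev d N l) * PowerSeries.C ((∏ i, ifac (l i) i) * dif l) := by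
    ext r
    rw [map_sum, KK, PowerSeries.coeff_mk, spectral2 h r, Finset.sum_div]
    refine Finset.sum_congr rfl fun l _ => ?_
    rw [PowerSeries.coeff_mul_C, eu_coeff]; ring
  rw [this, Finset.mul_sum]
  refine Finset.sum_congr rfl fun l hl => ?_
  rw [← mul_assoc, ← eu_add]
  congr 1
  have hl' : ∑ i, l i = d + cc N := by simpa [Finset.mem_finsuppAntidiag] using hl
  have hl2 : ∑ i, (l i : ℚ) = d + cc N := by exact_mod_cast hl'
  unfold wN
  rw [eu_sum, Finset.sum_sub_distrib, ← Finset.mul_sum, ← Finset.sum_div, hl2]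
  congr 1
  unfold CC ev
  ring

theorem coeff_DD_low (w : ℕ → BB) (N m : ℕ) (h : m < cc N) : PowerSeries.coeff m (DD w N) = 0 := by
  rw [coeff_DD]
  refine Finset.sum_eq_zero fun l hl => ?_
  have hl' : ∑ i, l i = m := by simpa [Finset.mem_finsuppAntidiag] using hl
  have : ∃ i, l i < (i : ℕ) := by
    by_contra hcon
    push Not at hcon
    have : cc N ≤ ∑ i, l i := Finset.sum_le_sum fun i _ => hcon i
    omega
  obtain ⟨i, hi⟩ := this
  have h0 : ∏ i : Fin N, ifac (l i) i = 0 := Finset.prod_eq_zero (Finset.mem_univ i) (if_neg (by omega))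
  rw [h0]
  simp

theorem DD_rescale (w w' : ℕ → BB) (a : ℚ) (hw : ∀ l : ℕ, w' l = w l * eu (l * a)) (N : ℕ) : DD w' N = PowerSeries.rescale (eu a) (DD w N) := by
  ext1 m
  rw [PowerSeries.coeff_rescale, coeff_DD, coeff_DD, Finset.mul_sum]
  refine Finset.sum_congr rfl fun l hl => ?_
  have hl' : ∑ i, l i = m := by simpa [Finset.mem_finsuppAntidiag] using hl
  simp_rw [hw]
  rw [Finset.prod_mul_distrib, eu_sum, ← Finset.sum_mul, ← Nat.cast_sum, hl', eu_pow]
  ring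

/-- finite tau -/
noncomputable def TT (N : ℕ) : SS := PowerSeries.mk fun d => eu (CC N) * PowerSeries.coeff (d + cc N) (DD (wN N) N)

theorem DD_TT (N : ℕ) : DD (wN N) N = PowerSeries.C (eu (- CC N)) * (PowerSeries.X ^ cc N * TT N) := by
  ext1 m
  rw [PowerSeries.coeff_C_mul, PowerSeries.coeff_X_pow_mul']
  split_ifs with h
  · rw [TT, PowerSeries.coeff_mk, ← mul_assoc, mul_comm (eu (-CC N)), eu_neg, one_mul, Nat.sub_add_cancel h]
  · rw [coeff_DD_low _ _ _ (by omega)]; simp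

theorem coeff_TT (N d : ℕ) (h : d ≤ N) : PowerSeries.coeff d (TT N) = KK d := by
  rw [TT, PowerSeries.coeff_mk, coeff_DD_wN N d h, ← mul_assoc, eu_neg, one_mul]

theorem KK_zero : KK 0 = 1 := by
  ext r
  rw [KK, PowerSeries.coeff_mk, PowerSeries.coeff_one]
  cases r with
  | zero =>
    have : AllT (Fin 0) 0 = Set.univ := by
      ext t; simp [AllT]
    simp [allC, this]
  | succ r =>
    have : AllT (Fin 0) (r+1) = ∅ := by
      ext t
      simp only [AllT, Set.mem_setOf_eq, Set.mem_empty_iff_false, iff_false, not_and]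
      intro h
      obtain ⟨x, _⟩ := h 0
      exact x.elim0
    simp [allC, this]

theorem thy_X_pow_mul (c : ℕ) (a : BB) (f : SS) : thy (PowerSeries.C a * (PowerSeries.X ^ c * f)) =
    (c : SS) * (PowerSeries.C a * (PowerSeries.X ^ c * f)) + PowerSeries.C a * (PowerSeries.X ^ c * thy f) := by
  ext1 m
  rw [coeff_thy, map_add, ← nsmul_eq_mul c, map_nsmul, nsmul_eq_mul, PowerSeries.coeff_C_mul, PowerSeries.coeff_C_mul, PowerSeries.coeff_X_pow_mul', PowerSeries.coeff_X_pow_mul']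
  split_ifs with h
  · rw [coeff_thy]
    obtain ⟨k, rfl⟩ : ∃ k, m = c + k := ⟨m - c, by omega⟩
    simp; ring
  · simp

theorem toda_TT (n : ℕ) : PowerSeries.X * (PowerSeries.rescale (eu 1) (TT (n+2)) * PowerSeries.rescale (eu (-1)) (TT n)) =
    TT (n+1) * thy (thy (TT (n+1))) - (thy (TT (n+1))) ^ 2 := by
  have r1 : DD (wN (n+1)) (n+2) = PowerSeries.rescale (eu 1) (DD (wN (n+2)) (n+2)) := by
    apply DD_rescale
    intro l
    unfold wN
    rw [← eu_add]; congr 1; push_cast; ring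
  have r2 : DD (wN (n+1)) n = PowerSeries.rescale (eu (-1)) (DD (wN n) n) := by
    apply DD_rescale
    intro l
    unfold wN
    rw [← eu_add]; congr 1; push_cast; ring
  have hX : ∀ (a : BB) (c : ℕ), PowerSeries.rescale a (PowerSeries.X ^ c : SS) = PowerSeries.C (a ^ c) * PowerSeries.X ^ c := by
    intro a c
    rw [map_pow, PowerSeries.rescale_X, mul_pow, map_pow]
  have hC : ∀ a b : BB, PowerSeries.rescale a (PowerSeries.C b : SS) = PowerSeries.C b := by
    intro a b
    ext1 m
    rw [PowerSeries.coeff_rescale, PowerSeries.coeff_C]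
    split_ifs with h <;> simp [h]
  rw [DD_TT, map_mul, map_mul, hX, hC, eu_pow] at r1 r2
  have hne : DD (wN (n+1)) n ≠ 0 := by
    intro h0
    rw [r2] at h0
    have := congrArg (PowerSeries.coeff (cc n)) h0
    rw [PowerSeries.coeff_C_mul, mul_assoc, PowerSeries.coeff_C_mul, PowerSeries.coeff_X_pow_mul', if_pos le_rfl, Nat.sub_self, PowerSeries.coeff_rescale, coeff_TT _ _ (Nat.zero_le _), KK_zero] at this
    simp only [pow_zero, one_mul, mul_one, map_zero] at this
    rw [← eu_add] at this
    have := congrArg (PowerSeries.coeff 0) this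
    rw [eu_coeff] at this
    simp at this
  have t := toda_det (wN (n+1)) n hne
  rw [r1, r2, DD_TT] at t
  have q1 := thy_X_pow_mul (cc (n+1)) (eu (-CC (n+1))) (TT (n+1))
  have q2 := thy_X_pow_mul (cc (n+1)) (eu (-CC (n+1))) (thy (TT (n+1)))
  set T := TT (n+1)
  set e : SS := PowerSeries.C (eu (-CC (n+1))) with he
  rw [q1] at t
  simp only [add_sub_cancel_left] at t
  rw [q2] at t
  simp only [add_sub_cancel_left] at t
  have hs : (PowerSeries.C (eu (-CC (n+2))) * PowerSeries.C (eu ((cc (n+2) : ℕ) * 1)) * (PowerSeries.C (eu (-CC n)) * PowerSeries.C (eu ((cc n : ℕ) * (-1)))) : SS) = e * e := by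
    rw [he, ← map_mul, ← map_mul, ← map_mul, ← map_mul, ← eu_add, ← eu_add, ← eu_add, ← eu_add]
    congr 2
    unfold CC
    rw [Fin.sum_univ_castSucc, Fin.sum_univ_castSucc, Fin.sum_univ_castSucc, cc_succ, cc_succ]
    simp
    ring
  have hp : (PowerSeries.X ^ cc (n+2) * PowerSeries.X ^ cc n : SS) = PowerSeries.X ^ cc (n+1) * PowerSeries.X ^ cc (n+1) * PowerSeries.X := by
    rw [← pow_add, ← pow_add, ← pow_succ]
    congr 1
    simp only [cc_succ]; omega
  have hene : e * e * (PowerSeries.X ^ cc (n+1) * PowerSeries.X ^ cc (n+1)) ≠ 0 := by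
    have h1 : e ≠ 0 := by
      rw [he]
      intro h0
      have h2 := congrArg (PowerSeries.coeff 0) h0
      rw [PowerSeries.coeff_C, if_pos rfl] at h2
      have h3 := eu_neg (CC (n+1))
      rw [h2] at h3
      simp at h3
    have h2 : (PowerSeries.X ^ cc (n+1) : SS) ≠ 0 := pow_ne_zero _ PowerSeries.X_ne_zero
    exact mul_ne_zero (mul_ne_zero h1 h1) (mul_ne_zero h2 h2)
  apply mul_left_cancel₀ hene
  set U := PowerSeries.rescale (eu 1) (TT (n+2))
  set V := PowerSeries.rescale (eu (-1)) (TT n)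
  rw [← hs]
  trans (PowerSeries.C (eu (-CC (n+2))) * PowerSeries.C (eu ((cc (n+2) : ℕ) * 1)) * (PowerSeries.C (eu (-CC n)) * PowerSeries.C (eu ((cc n : ℕ) * (-1)))) : SS) * (PowerSeries.X ^ cc (n+2) * PowerSeries.X ^ cc n : SS) * (U * V)
  · rw [hp]; ring
  · rw [hs] 
    trans e * e * (PowerSeries.X ^ cc (n+1) * PowerSeries.X ^ cc (n+1)) * (T * thy (thy T) - thy T ^ 2)
    · rw [← hs]
      linear_combination t + (PowerSeries.X ^ cc (n+1) * PowerSeries.X ^ cc (n+1)) * (T * thy (thy T) - thy T ^ 2) * (-hs)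
    · rfl

/-- tau function -/
noncomputable def tau : SS := PowerSeries.mk KK

theorem trunc_mul (f f' g g' : SS) (m : ℕ) (hf : ∀ k ≤ m, PowerSeries.coeff k f = PowerSeries.coeff k f')
    (hg : ∀ k ≤ m, PowerSeries.coeff k g = PowerSeries.coeff k g') :
    ∀ k ≤ m, PowerSeries.coeff k (f * g) = PowerSeries.coeff k (f' * g') := by
  intro k hk
  rw [PowerSeries.coeff_mul, PowerSeries.coeff_mul]
  refine Finset.sum_congr rfl fun p hp => ?_
  rw [Finset.HasAntidiagonal.mem_antidiagonal] at hp
  rw [hf _ (by omega), hg _ (by omega)]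

theorem toda : PowerSeries.X * (PowerSeries.rescale (eu 1) tau * PowerSeries.rescale (eu (-1)) tau) =
    tau * thy (thy tau) - (thy tau) ^ 2 := by
  ext1 m
  have h := congrArg (PowerSeries.coeff m) (toda_TT m)
  have hk : ∀ N, m ≤ N → ∀ k ≤ m, PowerSeries.coeff k tau = PowerSeries.coeff k (TT N) := by
    intro N hN k hk
    rw [coeff_TT _ _ (by omega), tau, PowerSeries.coeff_mk]
  have hr : ∀ a N, m ≤ N → ∀ k ≤ m, PowerSeries.coeff k (PowerSeries.rescale a tau) = PowerSeries.coeff k (PowerSeries.rescale a (TT N)) := by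
    intro a N hN k hk'
    rw [PowerSeries.coeff_rescale, PowerSeries.coeff_rescale, hk N hN k hk']
  have ht : ∀ f g : SS, (∀ k ≤ m, PowerSeries.coeff k f = PowerSeries.coeff k g) → (∀ k ≤ m, PowerSeries.coeff k (thy f) = PowerSeries.coeff k (thy g)) := by
    intro f g hfg k hk
    rw [coeff_thy, coeff_thy, hfg k hk]
  have e1 := hk (m+1) (by omega)
  rw [trunc_mul _ _ _ _ m (fun _ _ => rfl) (trunc_mul _ _ _ _ m (hr _ (m+2) (by omega)) (hr _ m le_rfl)) m le_rfl, h, map_sub, map_sub, pow_two, pow_two,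
    trunc_mul _ _ _ _ m e1 (ht _ _ (ht _ _ e1)) m le_rfl, trunc_mul _ _ _ _ m (ht _ _ e1) (ht _ _ e1) m le_rfl]

end toda
end HZ
set_option linter.all false
namespace HZ
open Equiv

section genus

/-- connected generating function in `u` -/
noncomputable def FF (d : ℕ) : BB := if d = 0 then 0 else PowerSeries.mk fun r => (hurwitzTupleCount d r : ℚ) / d.factorial / r.factorial

/-- connected generating function -/
noncomputable def Fs : SS := PowerSeries.mk FF

theorem FF_succ_coeff (d r : ℕ) : PowerSeries.coeff r (FF (d+1)) = (hurwitzTupleCount (d+1) r : ℚ) / (d+1).factorial / r.factorial := by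
  simp [FF]

theorem KK_rec (d : ℕ) : ((d + 1 : ℕ) : BB) * KK (d + 1) = ∑ i ∈ Finset.range (d + 1), ((i + 1 : ℕ) : BB) * FF (i + 1) * KK (d - i) := by
  ext r
  have hc : ∀ i, PowerSeries.coeff r (((i + 1 : ℕ) : BB) * FF (i + 1) * KK (d - i)) = ((i + 1 : ℕ) : ℚ) * PowerSeries.coeff r (FF (i + 1) * KK (d - i)) := by
    intro i
    rw [mul_assoc, ← nsmul_eq_mul, map_nsmul, nsmul_eq_mul]
  rw [map_sum, ← nsmul_eq_mul, map_nsmul, nsmul_eq_mul]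
  simp only [hc]
  rw [KK, PowerSeries.coeff_mk, exp_formula]
  push_cast
  rw [Finset.sum_div, Finset.sum_div, Finset.mul_sum]
  refine Finset.sum_congr rfl fun i hi => ?_
  rw [Finset.mem_range] at hi
  rw [PowerSeries.coeff_mul, Finset.Nat.sum_antidiagonal_eq_sum_range_succ (fun s t => PowerSeries.coeff s (FF (i+1)) * PowerSeries.coeff t (KK (d - i))), Finset.sum_div, Finset.sum_div, Finset.mul_sum, Finset.mul_sum]
  refine Finset.sum_congr rfl fun s hs => ?_
  rw [Finset.mem_range] at hs
  rw [FF_succ_coeff, KK, PowerSeries.coeff_mk, Nat.cast_choose ℚ (show i ≤ d by omega), Nat.cast_choose ℚ (show s ≤ r by omega), Nat.factorial_succ, Nat.factorial_succ]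
  have h1 : (d.factorial : ℚ) ≠ 0 := by positivity
  have h2 : (i.factorial : ℚ) ≠ 0 := by positivity
  have h3 : ((d - i).factorial : ℚ) ≠ 0 := by positivity
  have h4 : (r.factorial : ℚ) ≠ 0 := by positivity
  have h5 : (s.factorial : ℚ) ≠ 0 := by positivity
  have h6 : ((r - s).factorial : ℚ) ≠ 0 := by positivity
  push_cast
  field_simp

theorem thy_tau : thy tau = tau * thy Fs := by
  ext1 n
  rw [coeff_thy, mul_comm tau, PowerSeries.coeff_mul, Finset.Nat.sum_antidiagonal_eq_sum_range_succ (fun s t => PowerSeries.coeff s (thy Fs) * PowerSeries.coeff t tau)]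
  cases n with
  | zero => simp [coeff_thy]
  | succ d =>
    rw [Finset.sum_range_succ']
    simp only [coeff_thy, Fs, tau, PowerSeries.coeff_mk]
    rw [KK_rec]
    simp

/-- ratio of tau functions -/
noncomputable def Gs : SS := PowerSeries.mk fun n => ((n + 1 : ℕ) : BB) ^ 2 * FF (n + 1)

theorem X_Gs : PowerSeries.X * Gs = thy (thy Fs) := by
  ext1 n
  cases n with
  | zero => simp [coeff_thy]
  | succ n => rw [PowerSeries.coeff_succ_X_mul, coeff_thy, coeff_thy, Gs, Fs, PowerSeries.coeff_mk, PowerSeries.coeff_mk]; ring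

theorem thy_rescale (a : BB) (f : SS) : thy (PowerSeries.rescale a f) = PowerSeries.rescale a (thy f) := by
  ext1 n
  simp only [coeff_thy, PowerSeries.coeff_rescale]; ring

theorem tau_ne : tau ≠ 0 := by
  intro h
  have := congrArg (PowerSeries.coeff 0) h
  simp [tau, KK_zero] at this

theorem thy_Gs : thy Gs = Gs * (PowerSeries.rescale (eu 1) (thy Fs) + PowerSeries.rescale (eu (-1)) (thy Fs) - 2 * thy Fs) := by
  set p := PowerSeries.rescale (eu 1) tau with hp
  set q := PowerSeries.rescale (eu (-1)) tau with hq
  have h1 : p * q = tau ^ 2 * Gs := by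
    have h := toda
    rw [thy_tau, thy_mul, thy_tau, ← X_Gs] at h
    apply mul_left_cancel₀ (PowerSeries.X_ne_zero : (PowerSeries.X : SS) ≠ 0)
    rw [h]; ring
  have hp1 : thy p = p * PowerSeries.rescale (eu 1) (thy Fs) := by rw [hp, thy_rescale, thy_tau, map_mul]
  have hq1 : thy q = q * PowerSeries.rescale (eu (-1)) (thy Fs) := by rw [hq, thy_rescale, thy_tau, map_mul]
  have h2 := congrArg thy h1
  rw [thy_mul, thy_mul, hp1, hq1, pow_two, thy_mul, thy_tau] at h2
  apply mul_left_cancel₀ (pow_ne_zero 2 tau_ne)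
  linear_combination (-1 : SS) * h2 + (PowerSeries.rescale (eu 1) (thy Fs) + PowerSeries.rescale (eu (-1)) (thy Fs)) * h1

/-- the finite difference factor -/
noncomputable def ck (k : ℕ) : BB := eu k + eu (-k) - 2

theorem G_rec (n : ℕ) : (n : BB) * (((n + 1 : ℕ) : BB) ^ 2 * FF (n + 1)) =
    ∑ k ∈ Finset.range (n + 1), (k : BB) * (ck k * (FF k * (((n - k + 1 : ℕ) : BB) ^ 2 * FF (n - k + 1)))) := by
  have h := congrArg (PowerSeries.coeff n) thy_Gs
  rw [coeff_thy, mul_comm Gs, PowerSeries.coeff_mul, Finset.Nat.sum_antidiagonal_eq_sum_range_succ (fun s t => PowerSeries.coeff s (PowerSeries.rescale (eu 1) (thy Fs) + PowerSeries.rescale (eu (-1)) (thy Fs) - 2 * thy Fs) * PowerSeries.coeff t Gs)] at h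
  rw [Gs, PowerSeries.coeff_mk] at h
  rw [h]
  refine Finset.sum_congr rfl fun k _ => ?_
  rw [PowerSeries.coeff_mk, two_mul, map_sub, map_add, map_add, PowerSeries.coeff_rescale, PowerSeries.coeff_rescale, coeff_thy, Fs, PowerSeries.coeff_mk, eu_pow, eu_pow, ck]
  simp only [mul_one, mul_neg]
  ring

/-- leading behaviour -/
def Prof (n : ℕ) (a b : ℚ) (S : BB) : Prop := ∃ R : BB, S = PowerSeries.X ^ n * (PowerSeries.C a + PowerSeries.C b * PowerSeries.X ^ 2 + PowerSeries.X ^ 3 * R)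

theorem Prof.mul {n n' : ℕ} {a b a' b' : ℚ} {S S' : BB} (h : Prof n a b S) (h' : Prof n' a' b' S') :
    Prof (n + n') (a * a') (a * b' + a' * b) (S * S') := by
  obtain ⟨R, rfl⟩ := h
  obtain ⟨R', rfl⟩ := h'
  refine ⟨R * (PowerSeries.C a' + PowerSeries.C b' * PowerSeries.X ^ 2 + PowerSeries.X ^ 3 * R') + (PowerSeries.C a + PowerSeries.C b * PowerSeries.X ^ 2) * R' + PowerSeries.C b * PowerSeries.C b' * PowerSeries.X, ?_⟩
  simp only [map_add, map_mul]
  ring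

theorem Prof.add {n : ℕ} {a b a' b' : ℚ} {S S' : BB} (h : Prof n a b S) (h' : Prof n a' b' S') :
    Prof n (a + a') (b + b') (S + S') := by
  obtain ⟨R, rfl⟩ := h
  obtain ⟨R', rfl⟩ := h'
  refine ⟨R + R', ?_⟩
  simp only [map_add]
  ring

theorem Prof.zero (n : ℕ) : Prof n 0 0 0 := ⟨0, by simp⟩

theorem Prof.sum {n : ℕ} {ι : Type} (s : Finset ι) (a b : ι → ℚ) (S : ι → BB) (h : ∀ i ∈ s, Prof n (a i) (b i) (S i)) :
    Prof n (∑ i ∈ s, a i) (∑ i ∈ s, b i) (∑ i ∈ s, S i) := by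
  classical
  induction s using Finset.induction_on with
  | empty => simpa using Prof.zero n
  | insert i s hi ih =>
    rw [Finset.sum_insert hi, Finset.sum_insert hi, Finset.sum_insert hi]
    exact (h i (Finset.mem_insert_self i s)).add (ih fun j hj => h j (Finset.mem_insert_of_mem hj))

theorem Prof.smul {n : ℕ} {a b : ℚ} {S : BB} (c : ℚ) (h : Prof n a b S) : Prof n (c * a) (c * b) (PowerSeries.C c * S) := by
  obtain ⟨R, rfl⟩ := h
  refine ⟨PowerSeries.C c * R, ?_⟩
  simp only [map_mul]
  ring

theorem Prof.coeffs {n : ℕ} {a b : ℚ} {S : BB} (h : Prof n a b S) : a = PowerSeries.coeff n S ∧ b = PowerSeries.coeff (n + 2) S := by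
  obtain ⟨R, rfl⟩ := h
  rw [PowerSeries.coeff_X_pow_mul', PowerSeries.coeff_X_pow_mul', if_pos le_rfl, if_pos (by omega), Nat.sub_self, show n + 2 - n = 2 by omega]
  simp only [map_add, PowerSeries.coeff_X_pow_mul', PowerSeries.coeff_C_mul, PowerSeries.coeff_X_pow, PowerSeries.coeff_C]
  simp

theorem Prof.of_coeffs {n : ℕ} {S : BB} (h : ∀ j < n, PowerSeries.coeff j S = 0) (h1 : PowerSeries.coeff (n + 1) S = 0) :
    Prof n (PowerSeries.coeff n S) (PowerSeries.coeff (n + 2) S) S := by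
  refine ⟨PowerSeries.mk fun k => PowerSeries.coeff (n + 3 + k) S, ?_⟩
  ext m
  rw [PowerSeries.coeff_X_pow_mul']
  split_ifs with hm
  · obtain ⟨k, rfl⟩ : ∃ k, m = n + k := ⟨m - n, by omega⟩
    rw [show n + k - n = k by omega]
    simp only [map_add, PowerSeries.coeff_X_pow_mul', PowerSeries.coeff_C_mul, PowerSeries.coeff_X_pow, PowerSeries.coeff_C, PowerSeries.coeff_mk]
    match k with
    | 0 => simp
    | 1 => simp [h1]
    | 2 => simp
    | k + 3 => simp; congr 1; ring_nf
  · exact h m (by omega)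

theorem ck_prof (k : ℕ) : Prof 2 ((k : ℚ) ^ 2) ((k : ℚ) ^ 4 / 12) (ck k) := by
  have hc : ∀ r, PowerSeries.coeff r (ck k) = (k : ℚ) ^ r / r.factorial + (-(k : ℚ)) ^ r / r.factorial - if r = 0 then 2 else 0 := by
    intro r
    rw [ck, map_sub, map_add, eu_coeff, eu_coeff, show (2 : BB) = PowerSeries.C 2 from (map_ofNat _ 2).symm, PowerSeries.coeff_C]
  have h := Prof.of_coeffs (n := 2) (S := ck k) (by
    intro j hj
    rw [hc]
    interval_cases j <;> norm_num) (by rw [hc]; norm_num [Nat.factorial]; ring)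
  rw [hc, hc] at h
  convert h using 1
  · norm_num; 
  · norm_num [Nat.factorial]; ring

theorem FF_one : FF 1 = 1 := by
  ext r
  rw [FF_succ_coeff, PowerSeries.coeff_one]
  cases r with
  | zero =>
    have : hurwitzTupleCount 1 0 = 1 := by
      unfold hurwitzTupleCount
      rw [Nat.card_eq_one_iff_unique]
      refine ⟨⟨fun a b => Subtype.ext (Subsingleton.elim _ _)⟩, ⟨⟨fun i => i.elim0, fun i => i.elim0, by simp, fun x y => ⟨1, Subgroup.one_mem _, Subsingleton.elim _ _⟩⟩⟩⟩
    simp [this]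
  | succ r =>
    have : hurwitzTupleCount 1 (r+1) = 0 := by
      unfold hurwitzTupleCount
      have : IsEmpty {τ : Fin (r+1) → Equiv.Perm (Fin 1) //
          (∀ i, (τ i).IsSwap) ∧ (List.ofFn τ).prod = 1 ∧
          ∀ x y : Fin 1, ∃ σ ∈ Subgroup.closure (Set.range τ), σ x = y} := by
        refine ⟨fun t => ?_⟩
        obtain ⟨x, y, h, _⟩ := t.2.1 0
        exact h (Subsingleton.elim _ _)
      exact Nat.card_of_isEmpty
    simp [this]

/-- genus zero coefficients -/
noncomputable def a0 (d : ℕ) : ℚ := PowerSeries.coeff (2 * d - 2) (FF d)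
/-- genus one coefficients -/
noncomputable def b1 (d : ℕ) : ℚ := PowerSeries.coeff (2 * d) (FF d)

theorem G_prof_of {n : ℕ} (h : Prof (2 * n) (a0 (n+1)) (b1 (n+1)) (FF (n+1))) :
   Prof (2 * n) (((n + 1 : ℕ) : ℚ) ^ 2 * a0 (n+1)) (((n + 1 : ℕ) : ℚ) ^ 2 * b1 (n+1)) (((n + 1 : ℕ) : BB) ^ 2 * FF (n + 1)) := by
  have := h.smul (((n + 1 : ℕ) : ℚ) ^ 2)
  rw [map_pow, map_natCast] at this
  exact this

theorem rhs_prof (n : ℕ) (ih : ∀ m < n, Prof (2 * m) (a0 (m+1)) (b1 (m+1)) (FF (m+1))) :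
    Prof (2 * n) 
      (∑ k ∈ Finset.range (n + 1), (k : ℚ) * ((k : ℚ) ^ 2 * (a0 k * (((n - k + 1 : ℕ) : ℚ) ^ 2 * a0 (n - k + 1)))))
      (∑ k ∈ Finset.range (n + 1), (k : ℚ) * ((k : ℚ) ^ 2 * (a0 k * (((n - k + 1 : ℕ) : ℚ) ^ 2 * b1 (n - k + 1)) + (((n - k + 1 : ℕ) : ℚ) ^ 2 * a0 (n - k + 1)) * b1 k)
         + (a0 k * (((n - k + 1 : ℕ) : ℚ) ^ 2 * a0 (n - k + 1))) * ((k : ℚ) ^ 4 / 12)))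
      ((n : BB) * (((n + 1 : ℕ) : BB) ^ 2 * FF (n + 1))) := by
  rw [G_rec]
  apply Prof.sum
  intro k hk
  rw [Finset.mem_range] at hk
  cases k with
  | zero => simpa using Prof.zero _
  | succ k =>
    have p1 := ih k (by omega)
    have p2 := G_prof_of (ih (n - (k + 1)) (by omega))
    have p3 := ((ck_prof (k+1)).mul (p1.mul p2)).smul ((k+1 : ℕ) : ℚ)
    rw [map_natCast] at p3
    rw [show 2 + (2 * k + 2 * (n - (k+1))) = 2 * n by omega] at p3
    exact p3

theorem FF_prof (n : ℕ) : Prof (2 * n) (a0 (n+1)) (b1 (n+1)) (FF (n+1)) := by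
  induction n using Nat.strong_induction_on with
  | _ n ih =>
    suffices h : ∃ a b, Prof (2 * n) a b (FF (n+1)) by
      obtain ⟨a, b, h⟩ := h
      have e := h.coeffs
      rw [e.1, e.2] at h
      unfold a0 b1
      rw [show 2 * (n + 1) - 2 = 2 * n by omega, show 2 * (n + 1) = 2 * n + 2 by ring]
      exact h
    rcases Nat.eq_zero_or_pos n with rfl | hn
    · rw [FF_one]
      exact ⟨1, 0, 0, by simp⟩
    · have h := (rhs_prof n ih).smul ((n : ℚ) * ((n + 1 : ℕ) : ℚ) ^ 2)⁻¹
      have hne : ((n : ℚ) * ((n + 1 : ℕ) : ℚ) ^ 2) ≠ 0 := by positivity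
      have e : PowerSeries.C ((n : ℚ) * ((n + 1 : ℕ) : ℚ) ^ 2)⁻¹ * ((n : BB) * (((n + 1 : ℕ) : BB) ^ 2 * FF (n + 1))) = FF (n+1) := by
        rw [← mul_assoc (n : BB), ← map_natCast (PowerSeries.C (R := ℚ)) n, ← map_natCast (PowerSeries.C (R := ℚ)) (n+1), ← map_pow, ← map_mul, ← mul_assoc, ← map_mul, inv_mul_cancel₀ hne]
        simp
      rw [e] at h
      exact ⟨_, _, h⟩

end genus
end HZ
set_option linter.all false
namespace HZ

section rational

/-- Euler operator on rational power series -/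
noncomputable def te : BB →+ BB where
  toFun f := PowerSeries.mk fun n => (n : ℚ) * PowerSeries.coeff n f
  map_zero' := by ext n; simp
  map_add' f g := by ext n; simp; ring

theorem coeff_te (f : BB) (n : ℕ) : PowerSeries.coeff n (te f) = (n : ℚ) * PowerSeries.coeff n f := by
  simp [te]

theorem te_mul (f g : BB) : te (f * g) = f * te g + g * te f := by
  ext n
  rw [coeff_te, map_add, mul_comm g, PowerSeries.coeff_mul, PowerSeries.coeff_mul, PowerSeries.coeff_mul, Finset.mul_sum, ← Finset.sum_add_distrib]
  refine Finset.sum_congr rfl fun x hx => ?_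
  rw [coeff_te, coeff_te, ← Finset.HasAntidiagonal.mem_antidiagonal.1 hx]
  push_cast
  ring

theorem te_C_mul (c : ℚ) (f : BB) : te (PowerSeries.C c * f) = PowerSeries.C c * te f := by
  ext n; simp [coeff_te]; ring

theorem te_eq_zero {f : BB} (h : te f = 0) (h0 : PowerSeries.coeff 0 f = 0) : f = 0 := by
  ext n
  cases n with
  | zero => simpa using h0
  | succ n =>
    have := congrArg (PowerSeries.coeff (n+1)) h
    rw [coeff_te, map_zero] at this
    have hn : ((n + 1 : ℕ) : ℚ) ≠ 0 := by positivity
    simpa using (mul_eq_zero.1 this).resolve_left hn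

theorem te_lin {Z W : BB} (h : te Z = Z * W) (hW : PowerSeries.coeff 0 W = 0) (h0 : PowerSeries.coeff 0 Z = 0) : Z = 0 := by
  ext n
  rw [map_zero]
  induction n using Nat.strong_induction_on with
  | _ n ih =>
    rcases Nat.eq_zero_or_pos n with rfl | hn
    · exact h0
    · have := congrArg (PowerSeries.coeff n) h
      rw [coeff_te, PowerSeries.coeff_mul, Finset.sum_eq_zero] at this
      · have hn' : (n : ℚ) ≠ 0 := by positivity
        exact (mul_eq_zero.1 this).resolve_left hn'
      · rintro ⟨i, j⟩ hx
        rw [Finset.HasAntidiagonal.mem_antidiagonal] at hx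
        simp only at hx ⊢
        rcases Nat.eq_zero_or_pos j with rfl | hj
        · rw [hW, mul_zero]
        · rw [ih i (by omega), zero_mul]

theorem te_algebra (A B P Q T V : BB) (hT : T = te (te A)) (hTP : T = PowerSeries.X * P)
    (hP : te P = P * te T) (hV : V = te (te B) + PowerSeries.C (1/12) * te (te T))
    (hBQ : te (te B) = PowerSeries.X * Q) (hQ : te Q = Q * te T + P * te V)
    (hQ0 : PowerSeries.coeff 0 Q = 0) :
    (1 - T) * te B = PowerSeries.C (1/24) * (te T - T) := by
  have tX : te PowerSeries.X = (PowerSeries.X : BB) := by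
    ext n; rw [coeff_te, PowerSeries.coeff_X]; split_ifs with h <;> simp [h]
  have hz : ∀ f, PowerSeries.coeff 0 (te f) = 0 := fun f => by rw [coeff_te]; simp
  have hV0 : PowerSeries.coeff 0 V = 0 := by
    rw [hV, map_add, PowerSeries.coeff_C_mul, hz, hz]; simp
  have h1 : te T = T + T * te T := by
    have := congrArg te hTP
    rw [te_mul, tX, hP] at this
    linear_combination this + (-1 - te T) * hTP
  have hQV : Q = P * V := by
    rw [← sub_eq_zero]
    apply te_lin (W := te T) _ (hz _)
    · rw [map_sub, hQ0, PowerSeries.coeff_mul]; simp [hV0]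
    · rw [map_sub, te_mul, hQ, hP]; ring
  have h2 : te (te B) = T * V := by rw [hBQ, hQV, hTP]; ring
  have hT1 : (1 - T) ≠ 0 := by
    intro h
    have := congrArg (PowerSeries.coeff 0) h
    rw [map_sub, hT, hz] at this
    simp at this
  have c2 : (PowerSeries.C (1/24) : BB) * 2 = PowerSeries.C (1/12) := by
    rw [show (2 : BB) = PowerSeries.C 2 from (map_ofNat _ 2).symm, ← map_mul]; norm_num
  have hX : te B = PowerSeries.C (1/24) * (te T * te T) := by
    rw [← sub_eq_zero]
    apply te_eq_zero
    · apply mul_left_cancel₀ hT1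
      rw [map_sub, te_C_mul, te_mul, mul_zero]
      rw [hV] at h2
      linear_combination h2 - te (te T) * PowerSeries.C (1/12) * h1 - (1 - T) * te T * te (te T) * c2
    · rw [map_sub, hz, PowerSeries.coeff_C_mul, PowerSeries.coeff_mul]; simp [hz]
  rw [hX]
  linear_combination (PowerSeries.C (1/24) * (te T - 1)) * h1

theorem a0_zero : a0 0 = 0 := by simp [a0, FF]
theorem b1_zero : b1 0 = 0 := by simp [b1, FF]
theorem b1_one : b1 1 = 0 := by rw [b1, FF_one, PowerSeries.coeff_one]; simp

theorem key_eqs (n : ℕ) :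
   (n : ℚ) * (((n + 1 : ℕ) : ℚ) ^ 2 * a0 (n+1)) = ∑ k ∈ Finset.range (n + 1), (k : ℚ) * ((k : ℚ) ^ 2 * (a0 k * (((n - k + 1 : ℕ) : ℚ) ^ 2 * a0 (n - k + 1)))) ∧
   (n : ℚ) * (((n + 1 : ℕ) : ℚ) ^ 2 * b1 (n+1)) = ∑ k ∈ Finset.range (n + 1), (k : ℚ) * ((k : ℚ) ^ 2 * (a0 k * (((n - k + 1 : ℕ) : ℚ) ^ 2 * b1 (n - k + 1)) + (((n - k + 1 : ℕ) : ℚ) ^ 2 * a0 (n - k + 1)) * b1 k)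
         + (a0 k * (((n - k + 1 : ℕ) : ℚ) ^ 2 * a0 (n - k + 1))) * ((k : ℚ) ^ 4 / 12)) := by
  have h := (rhs_prof n (fun m _ => FF_prof m)).coeffs
  have g := (G_prof_of (FF_prof n)).smul (n : ℚ)
  rw [map_natCast] at g
  have g := g.coeffs
  exact ⟨g.1.trans h.1.symm, g.2.trans h.2.symm⟩

theorem coeff_form (d : ℕ) : (d : ℚ) * b1 d = (∑ i ∈ Finset.range (d + 1), (i : ℚ) ^ 2 * a0 i * (((d - i : ℕ) : ℚ) * b1 (d - i))) + ((d : ℚ) ^ 3 - (d : ℚ) ^ 2) * a0 d / 24 := by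
  let A : BB := PowerSeries.mk a0
  let B : BB := PowerSeries.mk b1
  let P : BB := PowerSeries.mk fun n => ((n + 1 : ℕ) : ℚ) ^ 2 * a0 (n+1)
  let Q : BB := PowerSeries.mk fun n => ((n + 1 : ℕ) : ℚ) ^ 2 * b1 (n+1)
  have cA : ∀ n, PowerSeries.coeff n (te (te A)) = (n : ℚ) ^ 2 * a0 n := fun n => by
    rw [coeff_te, coeff_te, PowerSeries.coeff_mk]; ring
  have cB : ∀ n, PowerSeries.coeff n (te (te B)) = (n : ℚ) ^ 2 * b1 n := fun n => by
    rw [coeff_te, coeff_te, PowerSeries.coeff_mk]; ring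
  have h := te_algebra A B P Q (te (te A)) (te (te B) + PowerSeries.C (1/12) * te (te (te (te A)))) rfl
    (by
      ext n
      rw [cA]
      cases n with
      | zero => simp
      | succ n => rw [PowerSeries.coeff_succ_X_mul, PowerSeries.coeff_mk])
    (by
      ext n
      rw [mul_comm, PowerSeries.coeff_mul, Finset.Nat.sum_antidiagonal_eq_sum_range_succ (fun s t => PowerSeries.coeff s (te (te (te A))) * PowerSeries.coeff t P), coeff_te, PowerSeries.coeff_mk, (key_eqs n).1]
      refine Finset.sum_congr rfl fun k _ => ?_
      rw [coeff_te, cA, PowerSeries.coeff_mk]; ring)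
    rfl
    (by
      ext n
      rw [cB]
      cases n with
      | zero => simp
      | succ n => rw [PowerSeries.coeff_succ_X_mul, PowerSeries.coeff_mk])
    (by
      ext n
      rw [mul_comm, mul_comm P, map_add, PowerSeries.coeff_mul, PowerSeries.coeff_mul, Finset.Nat.sum_antidiagonal_eq_sum_range_succ (fun s t => PowerSeries.coeff s (te (te (te A))) * PowerSeries.coeff t Q), Finset.Nat.sum_antidiagonal_eq_sum_range_succ (fun s t => PowerSeries.coeff s (te (te (te B) + PowerSeries.C (1/12) * te (te (te (te A))))) * PowerSeries.coeff t P), coeff_te, PowerSeries.coeff_mk, (key_eqs n).2, ← Finset.sum_add_distrib]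
      refine Finset.sum_congr rfl fun k _ => ?_
      rw [coeff_te, cA, PowerSeries.coeff_mk, PowerSeries.coeff_mk, coeff_te, map_add, cB, PowerSeries.coeff_C_mul, coeff_te, coeff_te, cA]; ring)
    (by rw [PowerSeries.coeff_mk]; simp [b1_one])
  have h' := congrArg (PowerSeries.coeff d) h
  rw [sub_mul, one_mul, map_sub, PowerSeries.coeff_C_mul, map_sub, PowerSeries.coeff_mul, Finset.Nat.sum_antidiagonal_eq_sum_range_succ (fun s t => PowerSeries.coeff s (te (te A)) * PowerSeries.coeff t (te B)), coeff_te _ d, coeff_te (te (te A)), cA] at h'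
  simp only [cA, coeff_te B] at h'
  simp only [B, PowerSeries.coeff_mk] at h'
  linear_combination h'

theorem hn0 (d : ℕ) : hurwitzNumber 0 (d+1) = a0 (d+1) * ((2 * d).factorial : ℚ) := by
  rw [hurwitzNumber, a0, FF_succ_coeff, show 2 * 0 + 2 * (d+1) - 2 = 2 * d by omega, show 2 * (d+1) - 2 = 2 * d by omega]
  have : ((2 * d).factorial : ℚ) ≠ 0 := by positivity
  field_simp

theorem hn1 (d : ℕ) : hurwitzNumber 1 (d+1) = b1 (d+1) * ((2 * (d+1)).factorial : ℚ) := by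
  rw [hurwitzNumber, b1, FF_succ_coeff, show 2 * 1 + 2 * (d+1) - 2 = 2 * (d+1) by omega]
  have : ((2 * (d+1)).factorial : ℚ) ≠ 0 := by positivity
  field_simp

end rational
end HZ

/-- The genus `1` recursion for the Hurwitz numbers:
`H_{1,d} = (d/6) C(d,2) (2d-1) H_{0,d}
  + ∑_{i=1}^{d-1} C(2d-2, 2i-2) (4d-2) i² (d-i) H_{0,i} H_{1,d-i}`. -/
theorem genus_one_hurwitz_recursion (d : ℕ) (hd : 1 ≤ d) :
    hurwitzNumber 1 d =
      ((d : ℚ) / 6) * (Nat.choose d 2 : ℚ) * (2 * (d : ℚ) - 1) * hurwitzNumber 0 d +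
        ∑ i ∈ Finset.Icc 1 (d - 1),
          (Nat.choose (2 * d - 2) (2 * i - 2) : ℚ) * (4 * (d : ℚ) - 2) * (i : ℚ) ^ 2 *
            ((d - i : ℕ) : ℚ) * hurwitzNumber 0 i * hurwitzNumber 1 (d - i) := by
  obtain ⟨e, rfl⟩ : ∃ e, d = e + 1 := ⟨d - 1, by omega⟩
  have h := HZ.coeff_form (e + 1)
  have hs : ∑ i ∈ Finset.Icc 1 (e + 1 - 1),
          (Nat.choose (2 * (e + 1) - 2) (2 * i - 2) : ℚ) * (4 * ((e + 1 : ℕ) : ℚ) - 2) * (i : ℚ) ^ 2 *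
            ((e + 1 - i : ℕ) : ℚ) * hurwitzNumber 0 i * hurwitzNumber 1 (e + 1 - i) =
      ((2 * e).factorial : ℚ) * (4 * ((e + 1 : ℕ) : ℚ) - 2) * ∑ i ∈ Finset.range (e + 1 + 1), (i : ℚ) ^ 2 * HZ.a0 i * (((e + 1 - i : ℕ) : ℚ) * HZ.b1 (e + 1 - i)) := by
    rw [Finset.sum_range_succ, Finset.sum_range_succ', HZ.a0_zero, Nat.sub_self, HZ.b1_zero]
    simp only [mul_zero, zero_mul, add_zero]
    rw [Finset.mul_sum, Nat.add_sub_cancel, Finset.range_eq_Ico, Finset.sum_Ico_add' (fun i : ℕ => ((2 * e).factorial : ℚ) * (4 * ((e + 1 : ℕ) : ℚ) - 2) * ((i : ℚ) ^ 2 * HZ.a0 i * (((e + 1 - i : ℕ) : ℚ) * HZ.b1 (e + 1 - i)))) 0 e 1]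
    refine Finset.sum_congr (by ext; simp only [Finset.mem_Icc, Finset.mem_Ico]; omega) fun i hi => ?_
    rw [Finset.mem_Ico] at hi
    obtain ⟨j, rfl⟩ : ∃ j, i = j + 1 := ⟨i - 1, by omega⟩
    obtain ⟨k, rfl⟩ : ∃ k, e = j + (k + 1) := ⟨e - j - 1, by omega⟩
    rw [show j + (k + 1) + 1 - (j + 1) = k + 1 by omega, HZ.hn0, HZ.hn1, show 2 * (j + (k + 1) + 1) - 2 = 2 * j + 2 * (k + 1) by omega, show 2 * (j + 1) - 2 = 2 * j by omega, Nat.cast_choose ℚ (Nat.le_add_right _ _), Nat.add_sub_cancel_left, show 2 * (j + (k + 1)) = 2 * j + 2 * (k + 1) by ring]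
    have h1 : ((2 * j).factorial : ℚ) ≠ 0 := by positivity
    have h2 : ((2 * (k + 1)).factorial : ℚ) ≠ 0 := by positivity
    field_simp
  rw [hs, HZ.hn0, HZ.hn1, Nat.cast_choose_two]
  have hf : ((2 * (e + 1)).factorial : ℚ) = (2 * e + 2) * (2 * e + 1) * ((2 * e).factorial : ℚ) := by
    rw [show 2 * (e + 1) = 2 * e + 1 + 1 by ring, Nat.factorial_succ, Nat.factorial_succ]
    push_cast; ring
  rw [hf]
  push_cast at h ⊢
  linear_combination ((2 * e).factorial : ℚ) * (4 * ((e : ℚ) + 1) - 2) * h
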